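/- arXiv:2410.01549 — 5 statements merged into one kernel-verified Lean document; each statement's English description precedes it below -/
import Mathlib

section
/- For every even integer k ≥ 4, there exists a Gallai k-coloring of the complete graph on 14·5^((k−2)/2) vertices that contains no monochromatic copy of the fan F_3. Consequently, the Gallai–Ramsey number satisfies GR_k(F_3) ≥ 14·5^((k−2)/2) + 1. -/
open SimpleGraph

/-- A monochromatic copy of `H` in the graph `G` edge-colored by `c`:
an injective map sending edges of `H` to edges of `G`, all image edges of one color. -/
def IsMonoCopy {α V : Type*} {k : ℕ} (G : SimpleGraph V) (c : V → V → Fin k)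
    (H : SimpleGraph α) : Prop :=
  ∃ (f : α → V) (i : Fin k), Function.Injective f ∧
    ∀ a b, H.Adj a b → G.Adj (f a) (f b) ∧ c (f a) (f b) = i

/-- The edge coloring `c` of `G` has no rainbow triangle. -/
def NoRainbowTriangle {V : Type*} {k : ℕ} (G : SimpleGraph V) (c : V → V → Fin k) : Prop :=
  ¬ ∃ x y z : V, G.Adj x y ∧ G.Adj y z ∧ G.Adj x z ∧
    c x y ≠ c y z ∧ c y z ≠ c x z ∧ c x y ≠ c x z

/-- The Gallai–Ramsey number `GR_k(H)`: the least `N` such that every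
rainbow-triangle-free `k`-edge-coloring of the complete graph on `N` vertices
contains a monochromatic copy of `H`. -/
noncomputable def GallaiRamsey (k : ℕ) {α : Type*} (H : SimpleGraph α) : ℕ :=
  sInf {N | ∀ c : Fin N → Fin N → Fin k, (∀ x y, c x y = c y x) →
    NoRainbowTriangle (⊤ : SimpleGraph (Fin N)) c →
    IsMonoCopy (⊤ : SimpleGraph (Fin N)) c H}

/-- The diagonal two-color Ramsey number `R(H, H)`. -/
noncomputable def Ramsey2 {α : Type*} (H : SimpleGraph α) : ℕ :=
  sInf {N | ∀ c : Fin N → Fin N → Fin 2, (∀ x y, c x y = c y x) →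
    IsMonoCopy (⊤ : SimpleGraph (Fin N)) c H}

/-- The fan `F_3 = K_1 + 3K_2`: vertex `0` is the center, joined to all other
vertices, together with the three disjoint edges `12`, `34`, `56`. -/
def fanF3 : SimpleGraph (Fin 7) :=
  SimpleGraph.fromRel (fun a b => a = 0 ∨ (a.val % 2 = 1 ∧ b.val = a.val + 1))

/-- The kipas `K̂_m = K_1 + P_m`: vertex `0` is the center, joined to all other
vertices, and `1, 2, …, m` form a path. -/
def kipasG (m : ℕ) : SimpleGraph (Fin (m + 1)) :=
  SimpleGraph.fromRel (fun a b => a = 0 ∨ (1 ≤ a.val ∧ b.val = a.val + 1))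

/-- The wheel `W_m = K_1 + C_m`: vertex `0` is the center, joined to all other
vertices, and `1, 2, …, m` form a cycle. -/
def wheelG (m : ℕ) : SimpleGraph (Fin (m + 1)) :=
  SimpleGraph.fromRel (fun a b =>
    a = 0 ∨ (1 ≤ a.val ∧ b.val = a.val + 1) ∨ (a.val = m ∧ b.val = 1))

/-- The star `K_{1,n}`: vertex `0` is the center, joined to all other vertices. -/
def starG (n : ℕ) : SimpleGraph (Fin (n + 1)) :=
  SimpleGraph.fromRel (fun a _ => a = 0)

/-- `K⁺_{1,n}`, the star `K_{1,n}` with one edge subdivided: vertex `0` is joined to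
`1, …, n`, and the extra vertex `n+1` is joined to `n`. -/
def starPlusG (n : ℕ) : SimpleGraph (Fin (n + 2)) :=
  SimpleGraph.fromRel (fun a b => (a = 0 ∧ b.val ≤ n) ∨ (a.val = n ∧ b.val = n + 1))

/-- The complete graph on `Fin N` with the single edge `{0, 1}` deleted. -/
def compMinusEdge (N : ℕ) : SimpleGraph (Fin N) where
  Adj x y := x ≠ y ∧ ¬(x.val = 0 ∧ y.val = 1) ∧ ¬(x.val = 1 ∧ y.val = 0)
  symm := by
    constructor
    intro x y h
    exact ⟨h.1.symm, fun hc => h.2.2 ⟨hc.2, hc.1⟩, fun hc => h.2.1 ⟨hc.2, hc.1⟩⟩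
  loopless := by constructor; intro x h; exact h.1 rfl

/-- The complete graph on `Fin M` together with one extra vertex (`none`)
joined exactly to the vertices of `A`. -/
def addVertex (M : ℕ) (A : Set (Fin M)) : SimpleGraph (Option (Fin M)) where
  Adj x y := (∃ a b : Fin M, x = some a ∧ y = some b ∧ a ≠ b) ∨
    (∃ a ∈ A, (x = some a ∧ y = none) ∨ (x = none ∧ y = some a))
  symm := by
    constructor
    rintro x y (⟨a, b, hx, hy, hab⟩ | ⟨a, ha, (⟨hx, hy⟩ | ⟨hx, hy⟩)⟩)
    · exact Or.inl ⟨b, a, hy, hx, hab.symm⟩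
    · exact Or.inr ⟨a, ha, Or.inr ⟨hy, hx⟩⟩
    · exact Or.inr ⟨a, ha, Or.inl ⟨hy, hx⟩⟩
  loopless := by
    constructor
    rintro x (⟨a, b, hx, hy, hab⟩ | ⟨a, ha, (⟨hx, hy⟩ | ⟨hx, hy⟩)⟩) <;> simp_all

/-- The star-critical Gallai–Ramsey number `GR*_k(H)`: the least `s` such that
every rainbow-triangle-free `k`-edge-coloring of the complete graph on
`GR_k(H) - 1` vertices plus one extra vertex joined to exactly `s` of them
contains a monochromatic copy of `H`. -/
noncomputable def GRstar (k : ℕ) {α : Type*} (H : SimpleGraph α) : ℕ :=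
  sInf {s | ∀ A : Finset (Fin (GallaiRamsey k H - 1)), A.card = s →
    ∀ c : Option (Fin (GallaiRamsey k H - 1)) → Option (Fin (GallaiRamsey k H - 1)) → Fin k,
      (∀ x y, c x y = c y x) →
      NoRainbowTriangle (addVertex (GallaiRamsey k H - 1) (↑A)) c →
      IsMonoCopy (addVertex (GallaiRamsey k H - 1) (↑A)) c H}

/-- `H` is Gallai-Ramsey-full for `k` colors: the complete graph on `GR_k(H)`
vertices minus one edge admits a rainbow-triangle-free `k`-edge-coloring with
no monochromatic copy of `H`. -/
def GallaiRamseyFull (k : ℕ) {α : Type*} (H : SimpleGraph α) : Prop :=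
  ∃ c : Fin (GallaiRamsey k H) → Fin (GallaiRamsey k H) → Fin k,
    (∀ x y, c x y = c y x) ∧
    NoRainbowTriangle (compMinusEdge (GallaiRamsey k H)) c ∧
    ¬ IsMonoCopy (compMinusEdge (GallaiRamsey k H)) c H

/-- Reachability inside the vertex set `s`: there is a walk all of whose
vertices lie in `s`. -/
def ReachableWithin {V : Type*} (R : SimpleGraph V) (s : Set V) (u v : V) : Prop :=
  ∃ w : R.Walk u v, ∀ x ∈ w.support, x ∈ s




/-- A monochromatic triangle of color `i`. -/
def MTri {V : Type} {k : ℕ} (c : V → V → Fin k) (i : Fin k) (v a b : V) : Prop :=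
  v ≠ a ∧ v ≠ b ∧ a ≠ b ∧ c v a = i ∧ c v b = i ∧ c a b = i

/-- Two pairs of vertices are disjoint. -/
def DisjP {V : Type} (a b a' b' : V) : Prop := a ≠ a' ∧ a ≠ b' ∧ b ≠ a' ∧ b ≠ b'

/-- A monochromatic fan, in explicit form. -/
def HasFan {V : Type} {k : ℕ} (c : V → V → Fin k) : Prop :=
  ∃ (i : Fin k) (v a₁ b₁ a₂ b₂ a₃ b₃ : V), MTri c i v a₁ b₁ ∧ MTri c i v a₂ b₂ ∧
    MTri c i v a₃ b₃ ∧ DisjP a₁ b₁ a₂ b₂ ∧ DisjP a₁ b₁ a₃ b₃ ∧ DisjP a₂ b₂ a₃ b₃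

theorem hasFan_of_mono {V : Type} {k : ℕ} (c : V → V → Fin k)
    (h : IsMonoCopy (⊤ : SimpleGraph V) c fanF3) : HasFan c := by
  obtain ⟨f, i, hf, h⟩ := h
  have hne : ∀ a b : Fin 7, a ≠ b → f a ≠ f b := fun a b hab h => hab (hf h)
  have hc : ∀ a b : Fin 7, (a ≠ b ∧ ((a = 0 ∨ (a.val % 2 = 1 ∧ b.val = a.val + 1)) ∨
      (b = 0 ∨ (b.val % 2 = 1 ∧ a.val = b.val + 1)))) → c (f a) (f b) = i := by
    intro a b hab
    exact (h a b hab).2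
  refine ⟨i, f 0, f 1, f 2, f 3, f 4, f 5, f 6, ?_, ?_, ?_, ?_, ?_, ?_⟩
  · refine ⟨hne _ _ ?_, hne _ _ ?_, hne _ _ ?_, hc _ _ ?_, hc _ _ ?_, hc _ _ ?_⟩ <;> decide
  · refine ⟨hne _ _ ?_, hne _ _ ?_, hne _ _ ?_, hc _ _ ?_, hc _ _ ?_, hc _ _ ?_⟩ <;> decide
  · refine ⟨hne _ _ ?_, hne _ _ ?_, hne _ _ ?_, hc _ _ ?_, hc _ _ ?_, hc _ _ ?_⟩ <;> decide
  · refine ⟨hne _ _ ?_, hne _ _ ?_, hne _ _ ?_, hne _ _ ?_⟩ <;> decide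
  · refine ⟨hne _ _ ?_, hne _ _ ?_, hne _ _ ?_, hne _ _ ?_⟩ <;> decide
  · refine ⟨hne _ _ ?_, hne _ _ ?_, hne _ _ ?_, hne _ _ ?_⟩ <;> decide

/-- Existence of a good coloring on the vertex set `V`. -/
def GoodCol (k : ℕ) (V : Type) : Prop :=
  ∃ c : V → V → Fin k, (∀ x y, c x y = c y x) ∧
    (∀ x y z, x ≠ y → y ≠ z → x ≠ z → c x y = c y z ∨ c y z = c x z ∨ c x y = c x z) ∧
    ¬ HasFan c

theorem GoodCol.transfer {k : ℕ} {V W : Type} (h : GoodCol k V) (e : W → V)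
    (he : Function.Injective e) : GoodCol k W := by
  obtain ⟨c, h1, h2, h3⟩ := h
  refine ⟨fun x y => c (e x) (e y), fun x y => h1 _ _,
    fun x y z hxy hyz hxz => h2 _ _ _ (he.ne hxy) (he.ne hyz) (he.ne hxz), ?_⟩
  rintro ⟨i, v, a₁, b₁, a₂, b₂, a₃, b₃, t1, t2, t3, d1, d2, d3⟩
  have ht : ∀ v a b, MTri (fun x y => c (e x) (e y)) i v a b → MTri c i (e v) (e a) (e b) :=
    fun v a b ⟨p, q, r, s⟩ => ⟨he.ne p, he.ne q, he.ne r, s⟩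
  have hd : ∀ a b a' b' : W, DisjP a b a' b' → DisjP (e a) (e b) (e a') (e b') :=
    fun a b a' b' ⟨p, q, r, s⟩ => ⟨he.ne p, he.ne q, he.ne r, he.ne s⟩
  exact h3 ⟨i, _, _, _, _, _, _, _, ht _ _ _ t1, ht _ _ _ t2, ht _ _ _ t3,
    hd _ _ _ _ d1, hd _ _ _ _ d2, hd _ _ _ _ d3⟩

/-- The two-coloring of `K_5` into two 5-cycles. -/
def pent (p q : Fin 5) : Fin 2 := if q = p + 1 ∨ p = q + 1 then 0 else 1

theorem pent_comm : ∀ p q, pent p q = pent q p := by decide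

theorem pent_tri : ∀ p q r : Fin 5, p ≠ q → p ≠ r → q ≠ r →
    ¬ (pent p q = pent p r ∧ pent p q = pent q r) := by decide

theorem fin2_pig : ∀ a b c : Fin 2, a = b ∨ b = c ∨ a = c := by decide

/-- Substituting a coloring into the pentagon coloring with two new colors. -/
def stepCol {k : ℕ} {V : Type} (c : V → V → Fin k) (x y : Fin 5 × V) : Fin (k + 2) :=
  if x.1 = y.1 then Fin.castAdd 2 (c x.2 y.2) else Fin.natAdd k (pent x.1 y.1)

theorem cast_ne_nat {k : ℕ} (a : Fin k) (b : Fin 2) : Fin.castAdd 2 a ≠ Fin.natAdd k b := by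
  intro h
  have := congrArg Fin.val h
  simp at this
  omega

theorem GoodCol.step {k : ℕ} {V : Type} (h : GoodCol k V) : GoodCol (k + 2) (Fin 5 × V) := by
  obtain ⟨c, h1, h2, h3⟩ := h
  refine ⟨stepCol c, ?_, ?_, ?_⟩
  · rintro ⟨p, x⟩ ⟨q, y⟩
    simp only [stepCol, eq_comm (a := p), h1 x y, pent_comm p q]
  · rintro ⟨p, x⟩ ⟨q, y⟩ ⟨r, z⟩ hxy hyz hxz
    simp only [stepCol]
    by_cases hpq : p = q
    · subst hpq
      by_cases hpr : p = r
      · subst hpr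
        simp only [if_true, Fin.castAdd_inj]
        exact h2 _ _ _ (by simpa using hxy) (by simpa using hyz) (by simpa using hxz)
      · simp [hpr]
    · by_cases hqr : q = r
      · subst hqr
        simp [hpq]
      · by_cases hpr : p = r
        · subst hpr
          simp [hpq, hqr, pent_comm]
        · simp only [hpq, hqr, hpr, if_false, Fin.natAdd_inj]
          exact fin2_pig _ _ _
  · rintro ⟨i, v, a₁, b₁, a₂, b₂, a₃, b₃, t1, t2, t3, d1, d2, d3⟩
    -- every triangle stays inside a part
    have key : ∀ a b, MTri (stepCol c) i v a b → v.1 = a.1 ∧ v.1 = b.1 := by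
      rintro ⟨q, a⟩ ⟨r, b⟩ ⟨n1, n2, n3, e1, e2, e3⟩
      obtain ⟨p, v⟩ := v
      simp only [stepCol] at e1 e2 e3
      by_cases hpq : p = q
      · subst hpq
        by_cases hpr : p = r
        · exact ⟨rfl, hpr⟩
        · simp only [hpr, if_true, if_false] at e1 e2
          exact absurd (e1.trans e2.symm) (cast_ne_nat _ _)
      · by_cases hpr : p = r
        · simp only [hpr, if_true] at e1 e2
          subst hpr
          simp only [hpq, if_false] at e1
          exact absurd (e2.trans e1.symm) (cast_ne_nat _ _)
        · by_cases hqr : q = r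
          · simp only [hqr, if_true] at e1 e3
            subst hqr
            simp only [hpq, if_false] at e1
            exact absurd (e3.trans e1.symm) (cast_ne_nat _ _)
          · simp only [hpq, hqr, hpr, if_false] at e1 e2 e3
            refine absurd ⟨?_, ?_⟩ (pent_tri p q r hpq hpr hqr)
            · exact (Fin.natAdd_inj _).1 (e1.trans e2.symm)
            · exact (Fin.natAdd_inj _).1 (e1.trans e3.symm)
    obtain ⟨p, v⟩ := v
    obtain ⟨q1, a1⟩ := a₁
    obtain ⟨r1, b1⟩ := b₁
    obtain ⟨q2, a2⟩ := a₂
    obtain ⟨r2, b2⟩ := b₂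
    obtain ⟨q3, a3⟩ := a₃
    obtain ⟨r3, b3⟩ := b₃
    obtain ⟨k1, k2⟩ := key _ _ t1
    obtain ⟨k3, k4⟩ := key _ _ t2
    obtain ⟨k5, k6⟩ := key _ _ t3
    simp only at k1 k2 k3 k4 k5 k6
    subst k1 k2 k3 k4 k5 k6
    have ht : ∀ a b, MTri (stepCol c) i (p, v) (p, a) (p, b) → MTri c (c v a1) v a b := by
      rintro a b ⟨n1, n2, n3, e1, e2, e3⟩
      have e0 := t1.2.2.2.1
      rw [← e0] at e1 e2 e3
      simp only [stepCol, if_true, Fin.castAdd_inj] at e1 e2 e3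
      exact ⟨by simpa using n1, by simpa using n2, by simpa using n3, e1, e2, e3⟩
    have hd : ∀ a b a' b' : V, DisjP (p, a) (p, b) (p, a') (p, b') → DisjP a b a' b' := by
      intro a b a' b' h
      simpa [DisjP] using h
    exact h3 ⟨_, _, _, _, _, _, _, _, ht _ _ t1, ht _ _ t2, ht _ _ t3,
      hd _ _ _ _ d1, hd _ _ _ _ d2, hd _ _ _ _ d3⟩

/-- Bit test for the red graph of the base coloring: a pentagon blow-up
`{0,13}, {4,6,12}, {2,3,8}, {1,5,7}, {9,10,11}`, in which `{4,6,12}` and `{9,10,11}` are red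
triangles. -/
def redBit (x y : Fin 14) : Bool :=
  Nat.testBit 47571857381846932751963819059206071999352937992597113347664 (14 * x.val + y.val)

/-- Coloring of the pairs inside a 14-vertex part; the value `0` is for the pair `{0, 13}`. -/
def inn (x y : Fin 14) : Fin 3 :=
  if (x = 0 ∨ x = 13) ∧ (y = 0 ∨ y = 13) then 0 else if redBit x y then 1 else 2

theorem inn_comm : ∀ x y, inn x y = inn y x := by decide +kernel

theorem inn_rainbow : ∀ x y z, x ≠ y → y ≠ z → x ≠ z →
    (inn x y = inn y z ∨ inn y z = inn x z ∨ inn x y = inn x z) := by decide +kernel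

theorem inn_zero : ∀ x y, x ≠ y → inn x y = 0 → (x = 0 ∧ y = 13) ∨ (x = 13 ∧ y = 0) := by
  decide +kernel

/-- Masks splitting the edges inside each monochromatic neighborhood into two intersecting
families. -/
def witMask (i : Fin 3) (v : Fin 14) : ℕ :=
  if i = 1 then
    ([80, 0, 0, 0, 64, 0, 16, 0, 0, 1024, 512, 512, 16, 80] : List ℕ).getD v.val 0
  else
    ([12, 32, 8, 4, 0, 2, 0, 2, 4, 0, 0, 0, 0, 12] : List ℕ).getD v.val 0

/-- Which of the two intersecting families an edge belongs to. -/
def edgeLab (i : Fin 3) (v a b : Fin 14) : Bool :=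
  Nat.testBit (witMask i v) a.val || Nat.testBit (witMask i v) b.val

set_option synthInstance.maxHeartbeats 400000 in
set_option synthInstance.maxSize 2000 in
theorem inn_pair : ∀ i : Fin 3, i ≠ 0 → ∀ v a : Fin 14, (inn v a = i ∧ v ≠ a) →
    ∀ b, (inn v b = i ∧ inn a b = i ∧ v ≠ b ∧ a ≠ b) →
    ∀ a', (inn v a' = i ∧ v ≠ a' ∧ a ≠ a' ∧ b ≠ a') →
    ∀ b', (inn v b' = i ∧ inn a' b' = i ∧ v ≠ b' ∧ a' ≠ b' ∧ a ≠ b' ∧ b ≠ b') →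
      edgeLab i v a b ≠ edgeLab i v a' b' := by
  decide +kernel

theorem inn_noFan (i : Fin 3) (hi : i ≠ 0) (v a₁ b₁ a₂ b₂ a₃ b₃ : Fin 14)
    (t1 : MTri inn i v a₁ b₁) (t2 : MTri inn i v a₂ b₂) (t3 : MTri inn i v a₃ b₃)
    (d1 : DisjP a₁ b₁ a₂ b₂) (d2 : DisjP a₁ b₁ a₃ b₃) (d3 : DisjP a₂ b₂ a₃ b₃) : False := by
  have h : ∀ a b a' b', MTri inn i v a b → MTri inn i v a' b' → DisjP a b a' b' →
      edgeLab i v a b ≠ edgeLab i v a' b' := by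
    rintro a b a' b' ⟨n1, n2, n3, e1, e2, e3⟩ ⟨n1', n2', n3', e1', e2', e3'⟩ ⟨m1, m2, m3, m4⟩
    exact inn_pair i hi v a ⟨e1, n1⟩ b ⟨e2, e3, n2, n3⟩ a' ⟨e1', n1', m1, m3⟩ b'
      ⟨e2', e3', n2', n3', m2, m4⟩
  have h1 := h _ _ _ _ t1 t2 d1
  have h2 := h _ _ _ _ t1 t3 d2
  have h3 := h _ _ _ _ t2 t3 d3
  revert h1 h2 h3
  generalize edgeLab i v a₁ b₁ = x
  generalize edgeLab i v a₂ b₂ = y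
  generalize edgeLab i v a₃ b₃ = z
  revert x y z
  decide

/-- The color of the special pair in each part. -/
def dcol (p : Fin 5) : Fin 2 := if p = 0 ∨ p = 1 then 0 else 1

/-- Color of an inner edge of part `p` from its type. -/
def innCol (p : Fin 5) (t : Fin 3) : Fin 4 :=
  if t = 0 then Fin.castAdd 2 (dcol p) else if t = 1 then 2 else 3

/-- The base coloring on 70 vertices. -/
def baseCol (x y : Fin 5 × Fin 14) : Fin 4 :=
  if x.1 = y.1 then innCol x.1 (inn x.2 y.2) else Fin.castAdd 2 (pent x.1 y.1)

theorem baseCol_inner (x y : Fin 5 × Fin 14) (t : Fin 3) (ht : t ≠ 0)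
    (h : baseCol x y = t.succ) : x.1 = y.1 ∧ inn x.2 y.2 = t := by
  have key : ∀ (p q : Fin 5) (s t : Fin 3), t ≠ 0 →
      (if p = q then innCol p s else Fin.castAdd 2 (pent p q)) = t.succ → p = q ∧ s = t := by
    decide +kernel
  exact key _ _ _ _ ht h

theorem baseCol_outer (x y : Fin 5 × Fin 14) (j : Fin 2) (h : baseCol x y = Fin.castAdd 2 j) :
    (x.1 = y.1 ∧ inn x.2 y.2 = 0 ∧ dcol x.1 = j) ∨ (x.1 ≠ y.1 ∧ pent x.1 y.1 = j) := by
  have key : ∀ (p q : Fin 5) (s : Fin 3) (j : Fin 2),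
      (if p = q then innCol p s else Fin.castAdd 2 (pent p q)) = Fin.castAdd 2 j →
      (p = q ∧ s = 0 ∧ dcol p = j) ∨ (p ≠ q ∧ pent p q = j) := by
    decide +kernel
  exact key _ _ _ _ h

theorem baseCol_outer' (x y : Fin 5 × Fin 14) (hxy : x ≠ y) (j : Fin 2)
    (h : baseCol x y = Fin.castAdd 2 j) :
    (∃ q, dcol q = j ∧ ((x = (q, 0) ∧ y = (q, 13)) ∨ (x = (q, 13) ∧ y = (q, 0)))) ∨
      (x.1 ≠ y.1 ∧ pent x.1 y.1 = j) := by
  rcases baseCol_outer x y j h with ⟨h1, h2, h3⟩ | h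
  · left
    obtain ⟨p, x⟩ := x
    obtain ⟨q, y⟩ := y
    simp only at h1 h2 h3
    subst h1
    refine ⟨p, h3, ?_⟩
    have hne : x ≠ y := fun h => hxy (by rw [h])
    rcases inn_zero x y hne h2 with ⟨rfl, rfl⟩ | ⟨rfl, rfl⟩
    · exact Or.inl ⟨rfl, rfl⟩
    · exact Or.inr ⟨rfl, rfl⟩
  · exact Or.inr h

theorem base_tri (j : Fin 2) (v a b : Fin 5 × Fin 14)
    (h : MTri baseCol (Fin.castAdd 2 j) v a b) :
    ∃ q, dcol q = j ∧ (q = v.1 ∨ (q ≠ v.1 ∧ pent q v.1 = j)) ∧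
      (v = (q, 0) ∨ a = (q, 0) ∨ b = (q, 0)) ∧ (v = (q, 13) ∨ a = (q, 13) ∨ b = (q, 13)) := by
  obtain ⟨n1, n2, n3, e1, e2, e3⟩ := h
  rcases baseCol_outer' _ _ n1 j e1 with ⟨q, hq, h⟩ | ⟨k1, l1⟩
  · refine ⟨q, hq, ?_, ?_, ?_⟩
    · left; rcases h with ⟨rfl, rfl⟩ | ⟨rfl, rfl⟩ <;> rfl
    · tauto
    · tauto
  rcases baseCol_outer' _ _ n2 j e2 with ⟨q, hq, h⟩ | ⟨k2, l2⟩
  · refine ⟨q, hq, ?_, ?_, ?_⟩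
    · left; rcases h with ⟨rfl, rfl⟩ | ⟨rfl, rfl⟩ <;> rfl
    · tauto
    · tauto
  rcases baseCol_outer' _ _ n3 j e3 with ⟨q, hq, h⟩ | ⟨k3, l3⟩
  · refine ⟨q, hq, ?_, ?_, ?_⟩
    · right
      have : a.1 = q := by rcases h with ⟨rfl, rfl⟩ | ⟨rfl, rfl⟩ <;> rfl
      rw [← this]
      exact ⟨k1.symm, by rw [pent_comm]; exact l1⟩
    · tauto
    · tauto
  exact absurd ⟨l1.trans l2.symm, l1.trans l3.symm⟩ (pent_tri _ _ _ k1 k2 k3)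

set_option synthInstance.maxHeartbeats 400000 in
set_option synthInstance.maxSize 2000 in
theorem parts_dec : ∀ (j : Fin 2) (q₁ q₂ q₃ p : Fin 5), dcol q₁ = j → dcol q₂ = j → dcol q₃ = j →
    q₁ ≠ q₂ → q₁ ≠ q₃ → q₂ ≠ q₃ → (q₁ = p ∨ (q₁ ≠ p ∧ pent q₁ p = j)) →
    (q₂ = p ∨ (q₂ ≠ p ∧ pent q₂ p = j)) → ¬ (q₃ = p ∨ (q₃ ≠ p ∧ pent q₃ p = j)) := by
  decide +kernel

theorem fin4_cases (i : Fin 4) : (∃ j : Fin 2, i = Fin.castAdd 2 j) ∨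
    (∃ t : Fin 3, t ≠ 0 ∧ i = t.succ) := by
  revert i; decide

theorem share_false {q : Fin 5} {v a b a' b' : Fin 5 × Fin 14} (d : DisjP a b a' b')
    (h1 : v = (q, 0) ∨ a = (q, 0) ∨ b = (q, 0)) (h2 : v = (q, 13) ∨ a = (q, 13) ∨ b = (q, 13))
    (h1' : v = (q, 0) ∨ a' = (q, 0) ∨ b' = (q, 0))
    (h2' : v = (q, 13) ∨ a' = (q, 13) ∨ b' = (q, 13)) : False := by
  obtain ⟨m1, m2, m3, m4⟩ := d
  have hne : ((q, 0) : Fin 5 × Fin 14) ≠ (q, 13) := by simp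
  have k1 : v = (q, 0) := by
    rcases h1 with h | h | h
    · exact h
    · subst h; grind
    · subst h; grind
  have k2 : v = (q, 13) := by
    rcases h2 with h | h | h
    · exact h
    · subst h; grind
    · subst h; grind
  exact hne (k1.symm.trans k2)

theorem good_base : GoodCol 4 (Fin 5 × Fin 14) := by
  refine ⟨baseCol, ?_, ?_, ?_⟩
  · rintro ⟨p, x⟩ ⟨q, y⟩
    by_cases h : p = q
    · subst h
      simp only [baseCol, if_true, inn_comm x y]
    · simp only [baseCol, h, Ne.symm h, if_false, pent_comm p q]
  · rintro ⟨p, x⟩ ⟨q, y⟩ ⟨r, z⟩ hxy hyz hxz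
    simp only [baseCol]
    by_cases hpq : p = q
    · subst hpq
      by_cases hpr : p = r
      · subst hpr
        simp only [if_true]
        have := inn_rainbow x y z (by simpa using hxy) (by simpa using hyz) (by simpa using hxz)
        rcases this with h | h | h <;> simp [h]
      · simp [hpr]
    · by_cases hqr : q = r
      · subst hqr
        simp [hpq]
      · by_cases hpr : p = r
        · subst hpr
          simp [hpq, hqr, pent_comm]
        · simp only [hpq, hqr, hpr, if_false]
          exact (fin2_pig (pent p q) (pent q r) (pent p r)).imp (congrArg _)
            (Or.imp (congrArg _) (congrArg _))
  · rintro ⟨i, v, a₁, b₁, a₂, b₂, a₃, b₃, t1, t2, t3, d1, d2, d3⟩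
    rcases fin4_cases i with ⟨j, rfl⟩ | ⟨t, ht, rfl⟩
    · obtain ⟨q₁, c1, p1, x1, y1⟩ := base_tri _ _ _ _ t1
      obtain ⟨q₂, c2, p2, x2, y2⟩ := base_tri _ _ _ _ t2
      obtain ⟨q₃, c3, p3, x3, y3⟩ := base_tri _ _ _ _ t3
      refine parts_dec j q₁ q₂ q₃ v.1 c1 c2 c3 ?_ ?_ ?_ p1 p2 p3
      · rintro rfl; exact share_false d1 x1 y1 x2 y2
      · rintro rfl; exact share_false d2 x1 y1 x3 y3
      · rintro rfl; exact share_false d3 x2 y2 x3 y3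
    · have key : ∀ a b, MTri baseCol t.succ v a b →
          v.1 = a.1 ∧ v.1 = b.1 ∧ MTri inn t v.2 a.2 b.2 := by
        rintro a b ⟨n1, n2, n3, e1, e2, e3⟩
        obtain ⟨f1, g1⟩ := baseCol_inner _ _ t ht e1
        obtain ⟨f2, g2⟩ := baseCol_inner _ _ t ht e2
        obtain ⟨f3, g3⟩ := baseCol_inner _ _ t ht e3
        exact ⟨f1, f2, fun h => n1 (Prod.ext f1 h), fun h => n2 (Prod.ext f2 h),
          fun h => n3 (Prod.ext f3 h), g1, g2, g3⟩
      obtain ⟨r1, s1, u1⟩ := key _ _ t1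
      obtain ⟨r2, s2, u2⟩ := key _ _ t2
      obtain ⟨r3, s3, u3⟩ := key _ _ t3
      have hd : ∀ a b a' b' : Fin 5 × Fin 14, v.1 = a.1 → v.1 = b.1 → v.1 = a'.1 → v.1 = b'.1 →
          DisjP a b a' b' → DisjP a.2 b.2 a'.2 b'.2 := by
        rintro a b a' b' ha hb ha' hb' ⟨m1, m2, m3, m4⟩
        exact ⟨fun h => m1 (Prod.ext (ha.symm.trans ha') h),
          fun h => m2 (Prod.ext (ha.symm.trans hb') h),
          fun h => m3 (Prod.ext (hb.symm.trans ha') h),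
          fun h => m4 (Prod.ext (hb.symm.trans hb') h)⟩
      exact inn_noFan t ht _ _ _ _ _ _ _ u1 u2 u3 (hd _ _ _ _ r1 s1 r2 s2 d1)
        (hd _ _ _ _ r1 s1 r3 s3 d2) (hd _ _ _ _ r2 s2 r3 s3 d3)

theorem good_all (m : ℕ) : GoodCol (2 * m + 4) (Fin (14 * 5 ^ (m + 1))) := by
  induction m with
  | zero =>
    refine good_base.transfer (Fintype.equivFinOfCardEq (n := 14 * 5 ^ (0 + 1)) ?_).symm
      (Equiv.injective _)
    simp
  | succ m ih =>
    refine ih.step.transfer (Fintype.equivFinOfCardEq (n := 14 * 5 ^ (m + 1 + 1)) ?_).symm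
      (Equiv.injective _)
    simp
    ring

/-- Sequences whose colors depend only on the smaller index. -/
theorem ramsey_seq (k m : ℕ) : ∃ N : ℕ, ∀ (V : Type) (c : V → V → Fin k) (S : Finset V),
    N ≤ S.card → ∃ (x : Fin m → V) (φ : Fin m → Fin k), Function.Injective x ∧ (∀ i, x i ∈ S) ∧
      ∀ i j, i < j → c (x i) (x j) = φ i := by
  classical
  induction m with
  | zero =>
    exact ⟨0, fun V c S _ => ⟨Fin.elim0, Fin.elim0, fun i => i.elim0, fun i => i.elim0,
      fun i => i.elim0⟩⟩
  | succ m ih =>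
    obtain ⟨N, hN⟩ := ih
    refine ⟨k * N + 2, fun V c S hS => ?_⟩
    obtain ⟨v, hv⟩ : S.Nonempty := Finset.card_pos.1 (by omega)
    have hcard : (S.erase v).card = S.card - 1 := Finset.card_erase_of_mem hv
    obtain ⟨i, -, hi⟩ := Finset.exists_lt_card_fiber_of_mul_lt_card_of_maps_to
      (s := S.erase v) (t := (Finset.univ : Finset (Fin k))) (f := fun w => c v w) (n := N)
      (fun _ _ => Finset.mem_univ _) (by rw [Finset.card_univ, Fintype.card_fin]; omega)
    obtain ⟨x, φ, h1, h2, h3⟩ := hN V c _ hi.le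
    have h2' : ∀ j, x j ≠ v ∧ x j ∈ S ∧ c v (x j) = i := by
      intro j
      have := h2 j
      simp only [Finset.mem_filter, Finset.mem_erase] at this
      tauto
    refine ⟨Fin.cons v x, Fin.cons i φ, ?_, ?_, ?_⟩
    · rw [Fin.cons_injective_iff]
      refine ⟨?_, h1⟩
      rintro ⟨j, hj⟩
      exact (h2' j).1 hj
    · intro j
      refine Fin.cases ?_ (fun j => ?_) j
      · simpa using hv
      · simpa using (h2' j).2.1
    · intro a b
      refine Fin.cases ?_ (fun a => ?_) a
      · refine Fin.cases (fun h => absurd h (lt_irrefl _)) (fun b _ => ?_) b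
        simpa using (h2' b).2.2
      · refine Fin.cases (fun h => absurd h (by simp)) (fun b h => ?_) b
        simpa using h3 a b (by simpa using h)

theorem ramsey_exists (k : ℕ) : ∃ N : ℕ, ∀ c : Fin N → Fin N → Fin k, (∀ x y, c x y = c y x) →
    IsMonoCopy (⊤ : SimpleGraph (Fin N)) c fanF3 := by
  classical
  obtain ⟨N, hN⟩ := ramsey_seq k (k * 6 + 1)
  refine ⟨N, fun c hc => ?_⟩
  obtain ⟨x, φ, h1, -, h3⟩ := hN (Fin N) c Finset.univ (by simp)
  obtain ⟨i, -, hi⟩ := Finset.exists_lt_card_fiber_of_mul_lt_card_of_maps_to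
    (s := (Finset.univ : Finset (Fin (k * 6 + 1)))) (t := (Finset.univ : Finset (Fin k)))
    (f := φ) (n := 6) (fun _ _ => Finset.mem_univ _) (by simp)
  obtain ⟨T, hT, hT7⟩ := Finset.exists_subset_card_eq (Nat.succ_le_of_lt hi)
  have hφ : ∀ j ∈ T, φ j = i := fun j hj => by simpa using hT hj
  let e := T.orderEmbOfFin hT7
  have he : ∀ a, e a ∈ T := fun a => Finset.orderEmbOfFin_mem T hT7 a
  have hlt : ∀ a b : Fin 7, a < b → c (x (e a)) (x (e b)) = i := by
    intro a b hab
    rw [h3 _ _ (e.strictMono hab), hφ _ (he a)]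
  have hinj : Function.Injective (fun a : Fin 7 => x (e a)) := h1.comp e.injective
  refine ⟨fun a => x (e a), i, hinj, fun a b hab => ⟨hinj.ne hab.ne, ?_⟩⟩
  rcases lt_or_gt_of_ne hab.ne with h | h
  · exact hlt a b h
  · rw [hc]; exact hlt b a h

/-- For every even integer `k ≥ 4`, there exists a Gallai `k`-coloring of the
complete graph on `14 · 5^((k-2)/2)` vertices with no monochromatic copy of the
fan `F_3`. Consequently `GR_k(F_3) ≥ 14 · 5^((k-2)/2) + 1`. -/
theorem fan3_gallai_lower (k : ℕ) (hk : 4 ≤ k) (hke : k % 2 = 0) :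
    (∃ c : Fin (14 * 5 ^ ((k - 2) / 2)) → Fin (14 * 5 ^ ((k - 2) / 2)) → Fin k,
      (∀ x y, c x y = c y x) ∧
      NoRainbowTriangle (⊤ : SimpleGraph (Fin (14 * 5 ^ ((k - 2) / 2)))) c ∧
      ¬ IsMonoCopy (⊤ : SimpleGraph (Fin (14 * 5 ^ ((k - 2) / 2)))) c fanF3) ∧
    14 * 5 ^ ((k - 2) / 2) + 1 ≤ GallaiRamsey k fanF3 := by
  obtain ⟨m, rfl⟩ : ∃ m, k = 2 * m + 4 := ⟨(k - 4) / 2, by omega⟩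
  have hm : (2 * m + 4 - 2) / 2 = m + 1 := by omega
  rw [hm]
  have conv : ∀ n, GoodCol (2 * m + 4) (Fin n) → ∃ c : Fin n → Fin n → Fin (2 * m + 4),
      (∀ x y, c x y = c y x) ∧ NoRainbowTriangle (⊤ : SimpleGraph (Fin n)) c ∧
      ¬ IsMonoCopy (⊤ : SimpleGraph (Fin n)) c fanF3 := by
    rintro n ⟨c, h1, h2, h3⟩
    refine ⟨c, h1, ?_, fun h => h3 (hasFan_of_mono c h)⟩
    rintro ⟨x, y, z, hxy, hyz, hxz, n1, n2, n3⟩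
    rcases h2 x y z hxy.ne hyz.ne hxz.ne with h | h | h
    · exact n1 h
    · exact n2 h
    · exact n3 h
  refine ⟨conv _ (good_all m), ?_⟩
  unfold GallaiRamsey
  refine le_csInf ?_ ?_
  · obtain ⟨N, hN⟩ := ramsey_exists (2 * m + 4)
    exact ⟨N, fun c hc _ => hN c hc⟩
  · intro N hN
    by_contra hlt
    have hle : N ≤ 14 * 5 ^ (m + 1) := by omega
    obtain ⟨c, h1, h2, h3⟩ := conv N ((good_all m).transfer (Fin.castLE hle)
      (Fin.castLE_injective hle))
    exact h3 (hN c h1 h2)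
end

section
/- There exists an edge 2-coloring of the complete graph on 13 vertices that contains no monochromatic copy of the fan F_3. Consequently GR_2(F_3) ≥ 14. -/
open SimpleGraph

/-- The adjacency matrix of color `1`; bit `13 x + y` is entry `(x, y)`. -/
def fanBits : ℕ := 295834748272989325699106042794219924052204212006050

/-- The 2-coloring of `K_13`. -/
def fanCol (x y : Fin 13) : Fin 2 := bif fanBits.testBit (13 * x.val + y.val) then 1 else 0

theorem fanCol_symm : ∀ x y, fanCol x y = fanCol y x := by decide +kernel

/-- Entry `(x, y)` has color `i`, on natural numbers (for fast evaluation). -/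
def colB (i : Bool) (x y : ℕ) : Bool := (fanBits.testBit (13 * x + y)).xor i

/-- `a` and `b` span an edge of one color inside the neighborhood of `v` in that color. -/
def edgeB (i : Bool) (v a b : ℕ) : Bool :=
  colB i v a && (colB i v b && (colB i a b && !(v.beq a || (v.beq b || a.beq b))))

/-- `f` holds for all natural numbers below `n`. -/
def allB : ℕ → (ℕ → Bool) → Bool
  | 0, _ => true
  | n + 1, f => f n && allB n f

theorem allB_spec (f : ℕ → Bool) : ∀ n, allB n f = true → ∀ x, x < n → f x = true
  | 0, _, x, hx => by omega
  | n + 1, h, x, hx => by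
    simp only [allB, Bool.and_eq_true] at h
    rcases Nat.lt_succ_iff_lt_or_eq.mp hx with hx | rfl
    · exact allB_spec f n h.2 x hx
    · exact h.1

/-- `x` is one of `a`, `b`. -/
def isOne (x a b : ℕ) : Bool := x.beq a || x.beq b

/-- No three disjoint edges in the neighborhood of `v`. -/
def checkB (i : Bool) (v : ℕ) : Bool :=
  allB 13 fun a => allB a fun b => !edgeB i v a b ||
    allB 13 fun p => allB p fun q => !edgeB i v p q || (isOne p a b || (isOne q a b ||
      allB 13 fun s => isOne s a b || (isOne s p q || allB s fun t =>
        !edgeB i v s t || (isOne t a b || isOne t p q))))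

theorem checkB_true : (allB 13 (checkB true) && allB 13 (checkB false)) = true := by
  decide +kernel

theorem checkB_spec (i : Bool) (v a b p q s t : ℕ) (hv : v < 13) (ha : a < 13) (hp : p < 13)
    (hs : s < 13) (hab : b < a) (hpq : q < p) (hst : t < s)
    (h1 : edgeB i v a b = true) (h2 : edgeB i v p q = true) (h3 : edgeB i v s t = true)
    (n1 : isOne p a b = false) (n2 : isOne q a b = false) (n3 : isOne s a b = false)
    (n4 : isOne s p q = false) (n5 : isOne t a b = false) (n6 : isOne t p q = false) : False := by
  have h := checkB_true
  rw [Bool.and_eq_true] at h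
  have hc : checkB i v = true := by
    cases i
    · exact allB_spec _ 13 h.2 v hv
    · exact allB_spec _ 13 h.1 v hv
  have e1 := allB_spec _ _ (allB_spec _ _ hc a ha) b hab
  simp only [h1, Bool.not_true, Bool.false_or] at e1
  have e2 := allB_spec _ _ (allB_spec _ _ e1 p hp) q hpq
  simp only [h2, n1, n2, Bool.not_true, Bool.false_or] at e2
  have e3 := allB_spec _ _ e2 s hs
  simp only [n3, n4, Bool.false_or] at e3
  have e4 := allB_spec _ _ e3 t hst
  simp only [h3, n5, n6, Bool.not_true, Bool.false_or] at e4
  exact Bool.noConfusion e4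

theorem colB_of_fanCol (i : Fin 2) (x y : Fin 13) (h : fanCol x y = i) :
    colB (i = 0) x.val y.val = true := by
  unfold fanCol at h
  unfold colB
  cases hb : fanBits.testBit (13 * x.val + y.val) <;> rw [hb] at h <;> subst h <;> rfl

theorem isOne_false (x a b : ℕ) (h1 : x ≠ a) (h2 : x ≠ b) : isOne x a b = false := by
  simp [isOne, Nat.beq_eq_true_eq, h1, h2, Bool.eq_false_iff]

theorem fanF3_adj_zero (a : Fin 7) (h : a ≠ 0) : fanF3.Adj 0 a := by
  simp [fanF3, SimpleGraph.fromRel_adj, h.symm]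

theorem fanCol_noCopy : ¬ IsMonoCopy (⊤ : SimpleGraph (Fin 13)) fanCol fanF3 := by
  rintro ⟨f, i, hf, h⟩
  have h0 : ∀ a : Fin 7, a ≠ 0 → fanCol (f 0) (f a) = i ∧ f 0 ≠ f a := fun a ha =>
    ⟨(h 0 a (fanF3_adj_zero a ha)).2, fun e => ha (hf e).symm⟩
  have n : ∀ a b : Fin 7, a ≠ b → (f a).val ≠ (f b).val := fun a b hab e => hab (hf (Fin.ext e))
  have e' : ∀ a b : Fin 7, a ≠ 0 → b ≠ 0 → fanF3.Adj a b →
      edgeB (i = 0) (f 0).val (f a).val (f b).val = true := by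
    intro a b ha hb hab
    have q1 := n 0 a ha.symm
    have q2 := n 0 b hb.symm
    have q3 := n a b hab.ne
    simp [edgeB, colB_of_fanCol i _ _ (h0 a ha).1, colB_of_fanCol i _ _ (h0 b hb).1,
      colB_of_fanCol i _ _ (h a b hab).2, Bool.eq_false_iff, Nat.beq_eq_true_eq, q1, q2, q3,
      -decide_eq_true_eq]
  -- each of the three edges can be oriented so that its values decrease
  have o : ∀ a b : Fin 7, a ≠ 0 → b ≠ 0 → fanF3.Adj a b → ∃ x y : Fin 7,
      ((x = a ∧ y = b) ∨ (x = b ∧ y = a)) ∧ (f y).val < (f x).val ∧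
      edgeB (i = 0) (f 0).val (f x).val (f y).val = true := by
    intro a b ha hb hab
    rcases lt_or_gt_of_ne (n a b hab.ne) with hlt | hlt
    · exact ⟨b, a, Or.inr ⟨rfl, rfl⟩, hlt, e' b a hb ha hab.symm⟩
    · exact ⟨a, b, Or.inl ⟨rfl, rfl⟩, hlt, e' a b ha hb hab⟩
  obtain ⟨a, b, hab, l1, g1⟩ := o 1 2 (by decide) (by decide)
    (by simp [fanF3, SimpleGraph.fromRel_adj])
  obtain ⟨p, q, hpq, l2, g2⟩ := o 3 4 (by decide) (by decide)
    (by simp [fanF3, SimpleGraph.fromRel_adj])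
  obtain ⟨s, t, hst, l3, g3⟩ := o 5 6 (by decide) (by decide)
    (by simp [fanF3, SimpleGraph.fromRel_adj])
  refine checkB_spec _ _ _ _ _ _ _ _ (f 0).isLt (f a).isLt (f p).isLt (f s).isLt l1 l2 l3 g1 g2 g3
    ?_ ?_ ?_ ?_ ?_ ?_
  all_goals
    apply isOne_false <;> apply n <;>
    rcases hab with ⟨rfl, rfl⟩ | ⟨rfl, rfl⟩ <;> rcases hpq with ⟨rfl, rfl⟩ | ⟨rfl, rfl⟩ <;>
    rcases hst with ⟨rfl, rfl⟩ | ⟨rfl, rfl⟩ <;> decide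

/-- A finite form of Ramsey's theorem for two colors. -/
theorem ramsey_aux {V : Type*} [DecidableEq V] (c : V → V → Fin 2)
    (hc : ∀ x y, c x y = c y x) : ∀ (k n m : ℕ), n + m = k → ∀ S : Finset V, 2 ^ k ≤ S.card →
    (∃ T ⊆ S, T.card = n ∧ ∀ x ∈ T, ∀ y ∈ T, x ≠ y → c x y = 0) ∨
    (∃ T ⊆ S, T.card = m ∧ ∀ x ∈ T, ∀ y ∈ T, x ≠ y → c x y = 1) := by
  intro k
  induction k with
  | zero =>
    intro n m h S _
    exact Or.inl ⟨∅, by simp, by simp; omega, by simp⟩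
  | succ k ih =>
    intro n m h S hS
    rcases n with _ | n
    · exact Or.inl ⟨∅, by simp, by simp, by simp⟩
    rcases m with _ | m
    · exact Or.inr ⟨∅, by simp, by simp, by simp⟩
    have hpos : 0 < 2 ^ k := by positivity
    obtain ⟨v, hv⟩ : S.Nonempty := Finset.card_pos.mp (by omega)
    have ext : ∀ (i : Fin 2) (r : ℕ) (T : Finset V), T ⊆ (S.erase v).filter (fun x => c v x = i) →
        T.card = r → (∀ x ∈ T, ∀ y ∈ T, x ≠ y → c x y = i) →
        ∃ T' ⊆ S, T'.card = r + 1 ∧ ∀ x ∈ T', ∀ y ∈ T', x ≠ y → c x y = i := by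
      intro i r T hT hr hm
      have hT' : ∀ x ∈ T, (x ≠ v ∧ x ∈ S) ∧ c v x = i := by
        intro x hx
        simpa using hT hx
      refine ⟨insert v T, ?_, ?_, ?_⟩
      · intro x hx
        rcases Finset.mem_insert.mp hx with rfl | hx
        · exact hv
        · exact (hT' x hx).1.2
      · rw [Finset.card_insert_of_notMem (fun hvT => (hT' v hvT).1.1 rfl), hr]
      · intro x hx y hy hxy
        rcases Finset.mem_insert.mp hx with hx | hx <;>
          rcases Finset.mem_insert.mp hy with hy | hy
        · exact absurd (hx.trans hy.symm) hxy
        · rw [hx]; exact (hT' y hy).2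
        · rw [hy, hc]; exact (hT' x hx).2
        · exact hm x hx y hy hxy
    have hsum := Finset.card_filter_add_card_filter_not (s := S.erase v) (fun x => c v x = 0)
    have hne : (S.erase v).filter (fun x => ¬ c v x = 0) =
        (S.erase v).filter (fun x => c v x = 1) := by
      apply Finset.filter_congr
      intro x _
      generalize c v x = z
      revert z
      decide
    rw [hne, Finset.card_erase_of_mem hv] at hsum
    have hp : 2 ^ (k + 1) = 2 * 2 ^ k := by ring
    have hsub : ∀ i : Fin 2, (S.erase v).filter (fun x => c v x = i) ⊆ S := fun i =>
      (Finset.filter_subset _ _).trans (Finset.erase_subset _ _)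
    by_cases hA : 2 ^ k ≤ ((S.erase v).filter (fun x => c v x = 0)).card
    · rcases ih n (m + 1) (by omega) _ hA with ⟨T, h1, h2, h3⟩ | ⟨T, h1, h2, h3⟩
      · exact Or.inl (ext 0 n T h1 h2 h3)
      · exact Or.inr ⟨T, h1.trans (hsub 0), h2, h3⟩
    · rcases ih (n + 1) m (by omega) _ (show 2 ^ k ≤
        ((S.erase v).filter (fun x => c v x = 1)).card by omega) with
        ⟨T, h1, h2, h3⟩ | ⟨T, h1, h2, h3⟩
      · exact Or.inl ⟨T, h1.trans (hsub 1), h2, h3⟩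
      · exact Or.inr (ext 1 m T h1 h2 h3)

theorem monoCopy_of_clique {N : ℕ} (c : Fin N → Fin N → Fin 2) (i : Fin 2) (T : Finset (Fin N))
    (hT : T.card = 7) (h : ∀ x ∈ T, ∀ y ∈ T, x ≠ y → c x y = i) (H : SimpleGraph (Fin 7)) :
    IsMonoCopy (⊤ : SimpleGraph (Fin N)) c H := by
  refine ⟨T.orderEmbOfFin hT, i, (T.orderEmbOfFin hT).injective, fun a b hab => ?_⟩
  have hne : T.orderEmbOfFin hT a ≠ T.orderEmbOfFin hT b :=
    fun e => hab.ne ((T.orderEmbOfFin hT).injective e)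
  exact ⟨by simpa using hab.ne, h _ (T.orderEmbOfFin_mem hT a) _ (T.orderEmbOfFin_mem hT b) hne⟩

theorem ramsey_exists_s1 (H : SimpleGraph (Fin 7)) (c : Fin (2 ^ 14) → Fin (2 ^ 14) → Fin 2)
    (hc : ∀ x y, c x y = c y x) : IsMonoCopy (⊤ : SimpleGraph (Fin (2 ^ 14))) c H := by
  rcases ramsey_aux c hc 14 7 7 rfl Finset.univ (by rw [Finset.card_univ, Fintype.card_fin]) with
    ⟨T, -, h2, h3⟩ | ⟨T, -, h2, h3⟩
  · exact monoCopy_of_clique c 0 T h2 h3 H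
  · exact monoCopy_of_clique c 1 T h2 h3 H

/-- There is an edge 2-coloring of the complete graph on 13 vertices with no
monochromatic copy of the fan `F_3`. Consequently `GR_2(F_3) ≥ 14`. -/
theorem fan3_two_color_lower :
    (∃ c : Fin 13 → Fin 13 → Fin 2, (∀ x y, c x y = c y x) ∧
      ¬ IsMonoCopy (⊤ : SimpleGraph (Fin 13)) c fanF3) ∧
    14 ≤ GallaiRamsey 2 fanF3 := by
  refine ⟨⟨fanCol, fanCol_symm, fanCol_noCopy⟩, ?_⟩
  unfold GallaiRamsey
  refine le_csInf ⟨2 ^ 14, fun c hc _ => ramsey_exists_s1 fanF3 c hc⟩ ?_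
  intro N hN
  by_contra hlt
  have hle : N ≤ 13 := by omega
  obtain ⟨f, i, hf, h⟩ := hN (fun x y => fanCol (Fin.castLE hle x) (Fin.castLE hle y))
    (fun x y => fanCol_symm _ _) (by
      rintro ⟨x, y, z, -, -, -, h1, h2, h3⟩
      revert h1 h2 h3
      beta_reduce
      generalize fanCol (Fin.castLE hle x) (Fin.castLE hle y) = p
      generalize fanCol (Fin.castLE hle y) (Fin.castLE hle z) = q
      generalize fanCol (Fin.castLE hle x) (Fin.castLE hle z) = r
      revert p q r
      decide)
  refine fanCol_noCopy ⟨fun a => Fin.castLE hle (f a), i,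
    (Fin.castLE_injective hle).comp hf, fun a b hab => ⟨?_, (h a b hab).2⟩⟩
  have hne : f a ≠ f b := fun e => hab.ne (hf e)
  exact fun e => hne (Fin.castLE_injective hle e)
end

section
/- Let m ≥ 6 be an even integer and let R be a simple graph whose vertex set is partitioned into five sets V_1, V_2, V_3, V_4, V_5 (indices taken modulo 5) such that: (i) for every i, every vertex of V_i is adjacent in R to every vertex of V_{i+1}; (ii) for every i, no vertex of V_i is adjacent in R to any vertex of V_{i+2}; (iii) no two vertices inside V_1 are adjacent, no two vertices inside V_3 are adjacent, and no two vertices inside V_4 are adjacent; (iv) in the subgraph of R induced on V_2, and likewise in the subgraph induced on V_5, every vertex has degree at most m/2 − 1 and every connected component has at most m − 1 vertices. Then R contains no copy of the kipas K̂_m (no injective map from the vertices of K̂_m into V(R) sending edges of K̂_m to edges of R). -/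
open SimpleGraph

/-- The blow-up lemma: a graph `R` whose vertices are partitioned into five
parts (via `P : V → Fin 5`, indices mod 5) such that consecutive parts are
completely joined, non-consecutive parts have no edges, parts `0, 2, 3`
(`V₁, V₃, V₄`) are internally edgeless, and inside parts `1, 4` (`V₂, V₅`)
every vertex has degree at most `m/2 - 1` and every connected component has at
most `m - 1` vertices, contains no copy of the kipas `K̂_m`. -/
theorem no_kipas_in_blowup {V : Type*} [Fintype V] (m : ℕ) (hm : 6 ≤ m)
    (hme : m % 2 = 0) (R : SimpleGraph V) (P : V → Fin 5)
    (hcomplete : ∀ u v : V, P v = P u + 1 → R.Adj u v)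
    (hfar : ∀ u v : V, P v = P u + 2 → ¬ R.Adj u v)
    (hempty : ∀ u v : V, P u = P v → (P u = 0 ∨ P u = 2 ∨ P u = 3) → ¬ R.Adj u v)
    (hdeg : ∀ u : V, (P u = 1 ∨ P u = 4) →
      ({v : V | P v = P u ∧ R.Adj u v}).ncard ≤ m / 2 - 1)
    (hcomp : ∀ u : V, (P u = 1 ∨ P u = 4) →
      ({v : V | ReachableWithin R {w : V | P w = P u} u v}).ncard ≤ m - 1) :
    ¬ ∃ f : Fin (m + 1) → V, Function.Injective f ∧
      ∀ a b, (kipasG m).Adj a b → R.Adj (f a) (f b) := by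
  rintro ⟨f, hf, hadj⟩
  obtain ⟨c, p, hinj, hc, hs⟩ : ∃ (c : V) (p : ℕ → V),
      (∀ i j, i < m → j < m → p i = p j → i = j) ∧ (∀ i, i < m → R.Adj c (p i)) ∧
      (∀ i, i + 1 < m → R.Adj (p i) (p (i + 1))) := by
    refine ⟨f 0, fun k => if h : k < m then f ⟨k + 1, by omega⟩ else f 0, ?_, ?_, ?_⟩
    · intro i j hi hj h
      simp only [hi, hj, dif_pos] at h
      have := hf h
      simpa using this
    · intro i hi
      simp only [hi, dif_pos]
      apply hadj
      rw [kipasG, SimpleGraph.fromRel_adj]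
      refine ⟨fun h => ?_, Or.inl (Or.inl rfl)⟩
      have := congrArg Fin.val h
      simp at this
    · intro i hi
      have hi' : i < m := by omega
      simp only [hi, hi', dif_pos]
      apply hadj
      rw [kipasG, SimpleGraph.fromRel_adj]
      refine ⟨fun h => ?_, Or.inl (Or.inr ⟨by simp, rfl⟩)⟩
      have := congrArg Fin.val h
      simp at this
  have hcl : ∀ u v, R.Adj u v → P v = P u ∨ P v = P u + 1 ∨ P u = P v + 1 := by
    intro u v h
    have h1 := fun e => hfar u v e h
    have h2 := fun e => hfar v u e h.symm
    have key : ∀ a b : Fin 5, ¬ b = a + 2 → ¬ a = b + 2 → b = a ∨ b = a + 1 ∨ a = b + 1 := by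
      decide
    exact key _ _ h1 h2
  have hemp : ∀ u v, R.Adj u v → P u = P v → P u = 1 ∨ P u = 4 := by
    intro u v h e
    have h1 := fun e' => hempty u v e e' h
    have key : ∀ a : Fin 5, ¬ (a = 0 ∨ a = 2 ∨ a = 3) → a = 1 ∨ a = 4 := by decide
    exact key _ h1
  by_cases hP : P c = 1 ∨ P c = 4
  · have hpair : ∀ i, i + 1 < m → P (p i) = P c ∨ P (p (i + 1)) = P c := by
      intro i hi
      have a1 := hcl _ _ (hc i (by omega))
      have a2 := hcl _ _ (hc (i + 1) hi)
      have a3 := hcl _ _ (hs i hi)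
      have a4 := hemp _ _ (hs i hi)
      generalize P (p i) = x at *
      generalize P (p (i + 1)) = y at *
      generalize P c = z at *
      clear hcomplete hfar hempty hdeg hcomp
      revert x y z
      decide
    have hsel : ∀ j : Fin (m / 2), ∃ i, (i = 2 * j.val ∨ i = 2 * j.val + 1) ∧ P (p i) = P c := by
      intro j
      have hj := j.2
      rcases hpair (2 * j.val) (by omega) with h | h
      · exact ⟨_, Or.inl rfl, h⟩
      · exact ⟨_, Or.inr rfl, h⟩
    choose g hg1 hg2 using hsel
    have hlt : ∀ j, g j < m := by
      intro j
      have := j.2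
      have := hg1 j
      omega
    have hinj2 : Function.Injective (fun j => p (g j)) := by
      intro a b hab
      have := hinj _ _ (hlt a) (hlt b) hab
      have := hg1 a
      have := hg1 b
      ext
      omega
    have hsub : Set.range (fun j => p (g j)) ⊆ {v : V | P v = P c ∧ R.Adj c v} := by
      rintro _ ⟨j, rfl⟩
      exact ⟨hg2 j, hc _ (hlt j)⟩
    have h1 := Set.ncard_le_ncard hsub (Set.toFinite _)
    have h2 := hdeg c hP
    have h3 : (Set.range (fun j => p (g j))).ncard = m / 2 := by
      rw [← Set.image_univ, Set.ncard_image_of_injective _ hinj2, Set.ncard_univ]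
      simp
    omega
  · have hconst : ∀ i, i + 1 < m → P (p (i + 1)) = P (p i) := by
      intro i hi
      have a1 := hcl _ _ (hc i (by omega))
      have a2 := hcl _ _ (hc (i + 1) hi)
      have a3 := hcl _ _ (hs i hi)
      have b1 := hemp _ _ (hc i (by omega))
      have b2 := hemp _ _ (hc (i + 1) hi)
      have key : ∀ x y z : Fin 5, (¬ (z = 1 ∨ z = 4) ∧ (x = z ∨ x = z + 1 ∨ z = x + 1) ∧
          (y = z ∨ y = z + 1 ∨ z = y + 1) ∧ (y = x ∨ y = x + 1 ∨ x = y + 1) ∧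
          ¬ z = x ∧ ¬ z = y) → y = x := by decide
      exact key _ _ _ ⟨hP, a1, a2, a3, fun e => hP (b1 e), fun e => hP (b2 e)⟩
    have hreach : ∀ i, i < m → P (p i) = P (p 0) ∧
        ReachableWithin R {w : V | P w = P (p 0)} (p 0) (p i) := by
      intro i
      induction i with
      | zero =>
        intro _
        exact ⟨rfl, SimpleGraph.Walk.nil, by simp⟩
      | succ k ih =>
        intro hk
        obtain ⟨e, w, hw⟩ := ih (by omega)
        have e2 := (hconst k hk).trans e
        refine ⟨e2, w.concat (hs k hk), ?_⟩
        intro x hx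
        rw [SimpleGraph.Walk.support_concat] at hx
        simp only [List.mem_append, List.mem_singleton] at hx
        rcases hx with hx | rfl
        · exact hw x hx
        · exact e2
    have h0 := hemp _ _ (hs 0 (by omega)) (hconst 0 (by omega)).symm
    have h1 := hcomp _ h0
    have hinj2 : Function.Injective (fun j : Fin m => p j) := by
      intro a b hab
      exact Fin.ext (hinj _ _ a.2 b.2 hab)
    have hsub : Set.range (fun j : Fin m => p j) ⊆
        {v : V | ReachableWithin R {w : V | P w = P (p 0)} (p 0) v} := by
      rintro _ ⟨j, rfl⟩
      exact (hreach j j.2).2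
    have h2 := Set.ncard_le_ncard hsub (Set.toFinite _)
    have h3 : (Set.range (fun j : Fin m => p j)).ncard = m := by
      rw [← Set.image_univ, Set.ncard_image_of_injective _ hinj2, Set.ncard_univ]
      simp
    omega
end

section
/- Let k ≥ 5 be odd and let m ≥ 6 be even. Set c = m−2 and d = m−4 if m ≡ 0 (mod 4), and c = m−1 and d = m−2 if m ≡ 2 (mod 4). Suppose there exists an edge 2-coloring of the complete graph on n vertices with no monochromatic copy of the kipas K̂_m. Then there exists a Gallai k-coloring of the complete graph on 2n + 10c(5^((k−3)/2) − 1) − 2d(k−3) vertices with no monochromatic copy of K̂_m. Consequently GR_k(K̂_m) ≥ 2(R_2(K̂_m) + 5c(5^((k−3)/2) − 1) − d(k−3)) − 1. -/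
open SimpleGraph

namespace KG

/-- `p 0, …, p (m-1)` is a path in color `i`. -/
def IsPath {V : Type} (χ : V → V → ℕ) (i m : ℕ) (p : ℕ → V) : Prop :=
  (∀ a < m, ∀ b < m, p a = p b → a = b) ∧ ∀ j, j + 1 < m → χ (p j) (p (j + 1)) = i

/-- No kipas in color `i`. -/
def Good {V : Type} (χ : V → V → ℕ) (i m : ℕ) : Prop :=
  ∀ (v : V) (p : ℕ → V), IsPath χ i m p → ¬ ∀ j < m, v ≠ p j ∧ χ v (p j) = i

/-- No path on `m` vertices in color `i`, and small degrees in color `i`. -/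
def Low {V : Type} (χ : V → V → ℕ) (i m : ℕ) : Prop :=
  (∀ p : ℕ → V, ¬ IsPath χ i m p) ∧
    ∀ (v : V) (T : Finset V), (∀ u ∈ T, v ≠ u ∧ χ v u = i) → T.card < m / 2

/-- Color `i` does not occur. -/
def Absent {V : Type} (χ : V → V → ℕ) (i : ℕ) : Prop :=
  ∀ x y : V, x ≠ y → χ x y ≠ i

/-- No rainbow triangle. -/
def Gal {V : Type} (χ : V → V → ℕ) : Prop :=
  ∀ x y z : V, x ≠ y → y ≠ z → x ≠ z → χ x y = χ y z ∨ χ y z = χ x z ∨ χ x y = χ x z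

/-- Existence of a coloring of the complete graph on `N` vertices, with no kipas, all colors in
`U`, and the colors of `L` sparse. -/
def Col (m N : ℕ) (U L : Set ℕ) : Prop :=
  ∃ (V : Type) (_ : Fintype V) (χ : V → V → ℕ), Fintype.card V = N ∧ (∀ x y, χ x y = χ y x) ∧
    Gal χ ∧ (∀ i, Good χ i m) ∧ (∀ i, i ∉ U → Absent χ i) ∧ ∀ i ∈ L, Low χ i m

lemma Low.good {V : Type} {χ : V → V → ℕ} {i m : ℕ} (h : Low χ i m) : Good χ i m :=
  fun _ p hp _ => h.1 p hp

lemma Absent.low {V : Type} {χ : V → V → ℕ} {i m : ℕ} (hm : 2 ≤ m) (h : Absent χ i) :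
    Low χ i m := by
  refine ⟨fun p hp => ?_, fun v T hT => ?_⟩
  · refine h (p 0) (p 1) (fun h01 => ?_) (hp.2 0 (by omega))
    have := hp.1 0 (by omega) 1 (by omega) h01
    omega
  · rcases T.eq_empty_or_nonempty with rfl | ⟨u, hu⟩
    · simp; omega
    · exact absurd (hT u hu).2 (h _ _ (hT u hu).1)

open Classical in
/-- Substitution of colorings into a reduced coloring. -/
noncomputable def blow {ι : Type} {V : ι → Type} (ρ : ι → ι → ℕ) (χ : ∀ j, V j → V j → ℕ)
    (x y : Σ j, V j) : ℕ :=
  if h : x.1 = y.1 then χ y.1 (h ▸ x.2) y.2 else ρ x.1 y.1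

section blow
variable {ι : Type} {V : ι → Type} {ρ : ι → ι → ℕ} {χ : ∀ j, V j → V j → ℕ}

@[simp] lemma blow_same (j : ι) (x y : V j) : blow ρ χ ⟨j, x⟩ ⟨j, y⟩ = χ j x y := by
  simp [blow]

lemma blow_diff (x y : Σ j, V j) (h : x.1 ≠ y.1) : blow ρ χ x y = ρ x.1 y.1 := by
  simp [blow, h]

lemma lift_path {m : ℕ} {p : ℕ → Σ j, V j} {j0 : ι} (hm : 0 < m)
    (h : ∀ j < m, (p j).1 = j0) : ∃ q : ℕ → V j0, ∀ j < m, p j = ⟨j0, q j⟩ := by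
  have h0 := h 0 hm
  have : ∀ j, ∃ q : V j0, j < m → p j = ⟨j0, q⟩ := by
    intro j
    by_cases hj : j < m
    · have := h j hj
      rcases hp : p j with ⟨a, b⟩
      rw [hp] at this
      subst this
      exact ⟨b, fun _ => rfl⟩
    · exact ⟨h0 ▸ (p 0).2, fun h => absurd h hj⟩
  choose q hq using this
  exact ⟨q, hq⟩

lemma IsPath.lift {i m : ℕ} {p : ℕ → Σ j, V j} {j0 : ι} {q : ℕ → V j0}
    (hp : IsPath (blow ρ χ) i m p) (hq : ∀ j < m, p j = ⟨j0, q j⟩) : IsPath (χ j0) i m q := by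
  refine ⟨fun a ha b hb hab => hp.1 a ha b hb ?_, fun j hj => ?_⟩
  · rw [hq a ha, hq b hb, hab]
  · have := hp.2 j hj
    rw [hq j (by omega), hq (j+1) hj] at this
    simpa using this

/-- A path which never changes part stays within the first part. -/
lemma const_part {m : ℕ} {p : ℕ → Σ j, V j}
    (h : ∀ j, j + 1 < m → (p j).1 = (p (j + 1)).1) : ∀ j < m, (p j).1 = (p 0).1 := by
  intro j
  induction j with
  | zero => intro _; rfl
  | succ j ih => intro hj; rw [← h j hj]; exact ih (by omega)

lemma blow_path {i m : ℕ} {p : ℕ → Σ j, V j} (hm : 0 < m) (hp : IsPath (blow ρ χ) i m p)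
    (h : ∀ j, j + 1 < m → (p j).1 = (p (j + 1)).1) :
    ∃ q, IsPath (χ (p 0).1) i m q ∧ ∀ j < m, p j = ⟨(p 0).1, q j⟩ := by
  obtain ⟨q, hq⟩ := lift_path hm (const_part h)
  exact ⟨q, hp.lift hq, hq⟩

lemma blow_deg {i m : ℕ} (hL : ∀ j, Low (χ j) i m) (v : Σ j, V j) (T : Finset (Σ j, V j))
    (hT : ∀ u ∈ T, v ≠ u ∧ blow ρ χ v u = i) (hs : ∀ u ∈ T, u.1 = v.1) : T.card < m / 2 := by
  classical
  obtain ⟨j0, v⟩ := v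
  have : T = (T.preimage (Sigma.mk j0) (sigma_mk_injective.injOn)).image (Sigma.mk j0) := by
    ext ⟨a, b⟩
    simp only [Finset.mem_image, Finset.mem_preimage]
    constructor
    · intro h
      have := hs _ h
      simp only at this
      subst this
      exact ⟨b, h, rfl⟩
    · rintro ⟨c, hc, he⟩
      rwa [← he]
  rw [this, Finset.card_image_of_injective _ sigma_mk_injective]
  refine (hL j0).2 v _ fun u hu => ?_
  have := hT _ (Finset.mem_preimage.1 hu)
  simp only [blow_same] at this
  exact ⟨fun h => this.1 (by rw [h]), this.2⟩

lemma blow_unused_same {i : ℕ} (hρ : ∀ x y, x ≠ y → ρ x y ≠ i) (x y : Σ j, V j)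
    (h : blow ρ χ x y = i) : x.1 = y.1 := by
  by_contra hne
  rw [blow_diff _ _ hne] at h
  exact hρ _ _ hne h

lemma blow_unused_good {i m : ℕ} (hm : 0 < m) (hρ : ∀ x y, x ≠ y → ρ x y ≠ i)
    (hG : ∀ j, Good (χ j) i m) : Good (blow ρ χ) i m := by
  intro v p hp hv
  have key := blow_unused_same (χ := χ) hρ
  obtain ⟨q, hq, hpq⟩ := blow_path hm hp (fun j hj => key _ _ (hp.2 j hj))
  have h0 := key _ _ (hv 0 hm).2
  generalize (p 0).1 = j0 at *
  obtain ⟨j1, v⟩ := v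
  simp only at h0
  subst h0
  refine hG _ v q hq fun j hj => ?_
  have := hv j hj
  rw [hpq j hj] at this
  simp only [blow_same] at this
  exact ⟨fun h => this.1 (by rw [h]), this.2⟩

lemma blow_unused_low {i m : ℕ} (hm : 0 < m) (hρ : ∀ x y, x ≠ y → ρ x y ≠ i)
    (hG : ∀ j, Low (χ j) i m) : Low (blow ρ χ) i m := by
  have key := blow_unused_same (χ := χ) hρ
  refine ⟨fun p hp => ?_, fun v T hT => ?_⟩
  · obtain ⟨q, hq, hpq⟩ := blow_path hm hp (fun j hj => key _ _ (hp.2 j hj))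
    exact (hG _).1 q hq
  · exact blow_deg hG v T hT fun u hu => (key _ _ (hT u hu).2).symm

lemma blow_unused_absent {i : ℕ} (hρ : ∀ x y, x ≠ y → ρ x y ≠ i)
    (hG : ∀ j, Absent (χ j) i) : Absent (blow ρ χ) i := by
  rintro ⟨a, x⟩ ⟨b, y⟩ hne h
  have := blow_unused_same (χ := χ) hρ _ _ h
  simp only at this
  subst this
  simp only [blow_same] at h
  exact hG a x y (fun h => hne (by rw [h])) h

/-- A set of positions hitting every two consecutive positions of `0, …, 2 * h - 1` has at least
`h` elements. -/
lemma hit_card (D : Finset ℕ) (h : ℕ) (hD : ∀ j, j + 1 < 2 * h → j ∈ D ∨ j + 1 ∈ D) :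
    h ≤ D.card := by
  have : ((D.filter (· < 2 * h)).image (· / 2)) = Finset.range h := by
    ext a
    simp only [Finset.mem_image, Finset.mem_filter, Finset.mem_range]
    constructor
    · rintro ⟨b, hb, rfl⟩; omega
    · intro ha
      rcases hD (2 * a) (by omega) with h1 | h1
      · exact ⟨_, ⟨h1, by omega⟩, by omega⟩
      · exact ⟨_, ⟨h1, by omega⟩, by omega⟩
  calc h = (Finset.range h).card := by simp
    _ ≤ _ := by rw [← this]; exact Finset.card_image_le.trans (Finset.card_filter_le _ _)

lemma blow_used_good {i m : ℕ} (hm : 2 ≤ m) (hme : m % 2 = 0)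
    (htri : ∀ x y z, x ≠ y → y ≠ z → x ≠ z → ρ x y = i → ρ x z = i → ρ y z ≠ i)
    (S : Set ι) (hS : ∀ x ∈ S, ∀ y ∈ S, x ≠ y → ρ x y ≠ i)
    (hin : ∀ j ∈ S, Low (χ j) i m) (hout : ∀ j, j ∉ S → Absent (χ j) i) :
    Good (blow ρ χ) i m := by
  classical
  have hlow : ∀ j, Low (χ j) i m := fun j =>
    if h : j ∈ S then hin j h else (hout j h).low hm
  have hcross : ∀ x y : Σ j, V j, x.1 ≠ y.1 → blow ρ χ x y = i → ρ x.1 y.1 = i := by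
    intro x y h1 h2
    rwa [blow_diff _ _ h1] at h2
  have hinS : ∀ x y : Σ j, V j, x ≠ y → x.1 = y.1 → blow ρ χ x y = i → x.1 ∈ S := by
    rintro ⟨a, x⟩ ⟨b, y⟩ h1 h2 h3
    simp only at h2
    subst h2
    by_contra hc
    simp only [blow_same] at h3
    exact hout a hc x y (fun h => h1 (by rw [h])) h3
  have pne : ∀ p, IsPath (blow ρ χ) i m p → ∀ j, j + 1 < m → p j ≠ p (j+1) := by
    intro p hp j hj h
    have := hp.1 j (by omega) (j+1) hj h
    omega
  intro v p hp hv
  by_cases hvS : v.1 ∈ S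
  · -- positions in the part of `v`
    set D := (Finset.range m).filter (fun j => (p j).1 = v.1) with hD
    have h1 : m / 2 ≤ D.card := by
      apply hit_card
      intro j hj
      have hj' : j + 1 < m := by omega
      by_contra hc
      push Not at hc
      simp only [hD, Finset.mem_filter, Finset.mem_range, not_and] at hc
      have ha := hc.1 (by omega)
      have hb := hc.2 hj'
      have ea := hcross _ _ (Ne.symm ha) (hv j (by omega)).2
      have eb := hcross _ _ (Ne.symm hb) (hv (j+1) hj').2
      have e := hp.2 j hj'
      by_cases hs : (p j).1 = (p (j+1)).1
      · exact hS _ hvS _ (hinS _ _ (pne p hp j hj') hs e) (Ne.symm ha) ea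
      · exact htri _ _ _ (Ne.symm ha) hs (Ne.symm hb) ea eb (hcross _ _ hs e)
    have h2 := blow_deg (ρ := ρ) hlow v (D.image p)
      (by
        intro u hu
        simp only [hD, Finset.mem_image, Finset.mem_filter, Finset.mem_range] at hu
        obtain ⟨j, hj, rfl⟩ := hu
        exact hv j hj.1)
      (by
        intro u hu
        simp only [hD, Finset.mem_image, Finset.mem_filter, Finset.mem_range] at hu
        obtain ⟨j, hj, rfl⟩ := hu
        exact hj.2)
    rw [Finset.card_image_of_injOn] at h2
    · omega
    · intro a ha b hb hab
      simp only [hD, Finset.coe_filter, Finset.mem_range, Set.mem_ofPred_eq] at ha hb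
      exact hp.1 a ha.1 b hb.1 hab
  · have hne : ∀ j < m, v.1 ≠ (p j).1 := by
      intro j hj h
      exact hvS (hinS _ _ (hv j hj).1 h (hv j hj).2)
    obtain ⟨q, hq, -⟩ := blow_path (by omega) hp (by
      intro j hj
      by_contra hs
      exact htri _ _ _ (hne j (by omega)) hs (hne (j+1) hj)
        (hcross _ _ (hne j (by omega)) (hv j (by omega)).2)
        (hcross _ _ (hne (j+1) hj) (hv (j+1) hj).2) (hcross _ _ hs (hp.2 j hj)))
    exact (hlow _).1 q hq

lemma blow_symm (hρ : ∀ x y, ρ x y = ρ y x) (hχ : ∀ j x y, χ j x y = χ j y x)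
    (x y : Σ j, V j) : blow ρ χ x y = blow ρ χ y x := by
  by_cases h : x.1 = y.1
  · obtain ⟨a, x⟩ := x
    obtain ⟨b, y⟩ := y
    simp only at h
    subst h
    simp [hχ a x y]
  · rw [blow_diff _ _ h, blow_diff _ _ (Ne.symm h), hρ]

lemma blow_gal (hρs : ∀ x y, ρ x y = ρ y x) (hρ : Gal ρ) (hχ : ∀ j, Gal (χ j)) :
    Gal (blow ρ χ) := by
  rintro ⟨a, x⟩ ⟨b, y⟩ ⟨c, z⟩ h1 h2 h3
  by_cases hab : a = b
  · subst hab
    by_cases hac : a = c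
    · subst hac
      simp only [blow_same]
      exact hχ a x y z (fun h => h1 (by rw [h])) (fun h => h2 (by rw [h]))
        (fun h => h3 (by rw [h]))
    · right; left
      rw [blow_diff _ _ hac, blow_diff _ _ hac]
  · by_cases hbc : b = c
    · subst hbc
      right; right
      rw [blow_diff _ _ hab, blow_diff _ _ hab]
    · by_cases hac : a = c
      · subst hac
        left
        rw [blow_diff _ _ hab, blow_diff _ _ hbc]
        exact hρs _ _
      · rw [blow_diff _ _ hab, blow_diff _ _ hbc, blow_diff _ _ hac]
        exact hρ _ _ _ hab hbc hac

end blow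

lemma Col.blow {ι : Type} [Fintype ι] {m : ℕ} (hm : 2 ≤ m) (hme : m % 2 = 0)
    (N : ι → ℕ) (U L : ι → Set ℕ) (h : ∀ j, Col m (N j) (U j) (L j))
    (ρ : ι → ι → ℕ) (hρs : ∀ x y, ρ x y = ρ y x) (hρ : Gal ρ) (U' L' : Set ℕ)
    (hU : ∀ i, i ∉ U' → (∀ x y, x ≠ y → ρ x y ≠ i) ∧ ∀ j, i ∉ U j)
    (hL : ∀ i ∈ L', (∀ x y, x ≠ y → ρ x y ≠ i) ∧ ∀ j, i ∈ L j)
    (hG : ∀ i, (∀ x y, x ≠ y → ρ x y ≠ i) ∨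
      ((∀ x y z, x ≠ y → y ≠ z → x ≠ z → ρ x y = i → ρ x z = i → ρ y z ≠ i) ∧
        ∃ S : Set ι, (∀ x ∈ S, ∀ y ∈ S, x ≠ y → ρ x y ≠ i) ∧ (∀ j ∈ S, i ∈ L j) ∧
          ∀ j, j ∉ S → i ∉ U j)) :
    Col m (∑ j, N j) U' L' := by
  choose V inst χ hcard hsymm hgal hgood habs hlow using h
  refine ⟨Σ j, V j, inferInstance, KG.blow ρ χ, ?_, blow_symm hρs hsymm, blow_gal hρs hρ hgal,
    fun i => ?_, fun i hi => ?_, fun i hi => ?_⟩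
  · rw [Fintype.card_sigma]
    exact Finset.sum_congr rfl fun j _ => hcard j
  · rcases hG i with h | ⟨htri, S, hS, hin, hout⟩
    · exact blow_unused_good (by omega) h fun j => hgood j i
    · exact blow_used_good hm hme htri S hS (fun j hj => hlow j i (hin j hj))
        fun j hj => habs j i (hout j hj)
  · exact blow_unused_absent (hU i hi).1 fun j => habs j i ((hU i hi).2 j)
  · exact blow_unused_low (by omega) (hL i hi).1 fun j => hlow j i ((hL i hi).2 j)

/-- The reduced pentagon coloring. -/
def pentρ (a b : ℕ) (x y : Fin 5) : ℕ :=
  if x - y = 1 ∨ y - x = 1 then a else b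

lemma pentρ_a {a b : ℕ} (hab : a ≠ b) (x y : Fin 5) : pentρ a b x y = a ↔ (x - y = 1 ∨ y - x = 1) := by
  unfold pentρ; split_ifs with h <;> simp [h, hab.symm]

lemma pentρ_b {a b : ℕ} (hab : a ≠ b) (x y : Fin 5) :
    pentρ a b x y = b ↔ ¬ (x - y = 1 ∨ y - x = 1) := by
  unfold pentρ; split_ifs with h <;> simp [h, hab]

lemma Col.pent {m : ℕ} (hm : 2 ≤ m) (hme : m % 2 = 0) {a b : ℕ} (hab : a ≠ b)
    {N1 N2 N3 : ℕ} {U1 U2 U3 L1 L2 L3 : Set ℕ} (h1 : Col m N1 U1 L1) (h2 : Col m N2 U2 L2)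
    (h3 : Col m N3 U3 L3) (a1 : a ∉ U1) (b1 : b ∉ U1) (a2 : a ∈ L2) (b2 : b ∉ U2)
    (a3 : a ∉ U3) (b3 : b ∈ L3) (U L : Set ℕ)
    (hU : ∀ i, i ∉ U → i ≠ a ∧ i ≠ b ∧ i ∉ U1 ∧ i ∉ U2 ∧ i ∉ U3)
    (hL : ∀ i ∈ L, i ≠ a ∧ i ≠ b ∧ i ∈ L1 ∧ i ∈ L2 ∧ i ∈ L3) :
    Col m (N1 + 2 * N2 + 2 * N3) U L := by
  have hun : ∀ i, i ≠ a → i ≠ b → ∀ x y, x ≠ y → pentρ a b x y ≠ i := by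
    intro i ha hb x y _
    unfold pentρ
    split_ifs
    · exact ha.symm
    · exact hb.symm
  have := Col.blow hm hme ![N1, N2, N3, N3, N2] ![U1, U2, U3, U3, U2] ![L1, L2, L3, L3, L2]
    (by intro j; fin_cases j <;> simpa) (pentρ a b)
    (by intro x y; unfold pentρ; simp only [or_comm])
    (by
      intro x y z _ _ _
      unfold pentρ
      split_ifs <;> simp) U L
    (by
      intro i hi
      obtain ⟨ha, hb, h1, h2, h3⟩ := hU i hi
      refine ⟨hun i ha hb, ?_⟩
      intro j; fin_cases j <;> simpa)
    (by
      intro i hi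
      obtain ⟨ha, hb, h1, h2, h3⟩ := hL i hi
      refine ⟨hun i ha hb, ?_⟩
      intro j; fin_cases j <;> simpa)
    (by
      intro i
      by_cases ha : i = a
      · subst ha
        right
        refine ⟨?_, {1, 4}, ?_, ?_, ?_⟩
        · simp only [ne_eq, pentρ_a hab]; decide
        · simp only [ne_eq, pentρ_a hab, Set.mem_insert_iff, Set.mem_singleton_iff]; decide
        · intro j hj; fin_cases j <;> simp_all
        · intro j hj; fin_cases j <;> simp_all
      · by_cases hb : i = b
        · subst hb
          right
          refine ⟨?_, {2, 3}, ?_, ?_, ?_⟩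
          · simp only [ne_eq, pentρ_b hab]; decide
          · simp only [ne_eq, pentρ_b hab, Set.mem_insert_iff, Set.mem_singleton_iff]; decide
          · intro j hj; fin_cases j <;> simp_all
          · intro j hj; fin_cases j <;> simp_all
        · exact Or.inl (hun i ha hb))
  convert this using 1
  simp [Fin.sum_univ_succ]
  ring

lemma Col.double {m : ℕ} (hm : 2 ≤ m) (hme : m % 2 = 0) {a : ℕ} {N : ℕ} {U L : Set ℕ}
    (h : Col m N U L) (ha : a ∉ U) : Col m (2 * N) (insert a U) ∅ := by
  have := Col.blow (ι := Fin 2) hm hme (fun _ => N) (fun _ => U) (fun _ => L) (fun _ => h)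
    (fun _ _ => a) (fun _ _ => rfl) (fun _ _ _ _ _ _ => Or.inl rfl) (insert a U) ∅
    (by
      intro i hi
      simp only [Set.mem_insert_iff, not_or] at hi
      exact ⟨fun _ _ _ => Ne.symm hi.1, fun _ => hi.2⟩)
    (by simp)
    (by
      intro i
      by_cases hi : i = a
      · subst hi
        right
        refine ⟨by intro x y z; omega, ∅, by simp, by simp, by simpa⟩
      · left
        exact fun _ _ _ => Ne.symm hi)
  simpa using this

/-- Monochromatic clique. -/
lemma col_clique {m : ℕ} (hm : 2 ≤ m) (z : ℕ) : Col m (m / 2) {z} Set.univ := by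
  classical
  have hlow : ∀ i, Low (fun _ _ : Fin (m / 2) => z) i m := by
    intro i
    refine ⟨fun p hp => ?_, fun v T hT => ?_⟩
    · have := Finset.card_le_card_of_injOn (s := Finset.range m) (t := Finset.univ) p (by simp)
        (by intro a ha b hb; simp at ha hb; exact hp.1 a ha b hb)
      simp at this
      omega
    · have : T.card < (Finset.univ : Finset (Fin (m / 2))).card := by
        apply Finset.card_lt_card
        rw [Finset.ssubset_univ_iff]
        rintro rfl
        exact (hT v (Finset.mem_univ _)).1 rfl
      simpa using this
  exact ⟨Fin (m / 2), inferInstance, fun _ _ => z, by simp, fun _ _ => rfl,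
    fun _ _ _ _ _ _ => Or.inl rfl, fun i => (hlow i).good,
    fun i hi x y _ h => hi h.symm, fun i _ => hlow i⟩

/-- Circulant two-colored clique. -/
lemma col_cluster {m c w : ℕ} (hc : 2 ≤ c) (hcm : c < m) (h1 : 2 * w < m / 2) (hwc : 2 * w < c)
    (h2 : c - 1 - 2 * w < m / 2) (p q : ℕ) (hpq : p ≠ q) : Col m c {p, q} Set.univ := by
  classical
  have : NeZero c := ⟨by omega⟩
  let I : Finset ℕ := Finset.Icc 1 w ∪ Finset.Icc (c - w) (c - 1)
  let χ : ZMod c → ZMod c → ℕ := fun x y => if (x - y).val ∈ I then p else q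
  have hval : ∀ x y : ZMod c, x ≠ y → (x - y).val ≠ 0 ∧ (x - y).val < c ∧
      (y - x).val = c - (x - y).val := by
    intro x y hxy
    have hne : x - y ≠ 0 := sub_ne_zero.2 hxy
    have : NeZero (x - y) := ⟨hne⟩
    refine ⟨by simpa [ZMod.val_eq_zero] using hne, ZMod.val_lt _, ?_⟩
    rw [← neg_sub x y, ZMod.val_neg_of_ne_zero]
  have hsymm : ∀ x y, χ x y = χ y x := by
    intro x y
    by_cases hxy : x = y
    · rw [hxy]
    · obtain ⟨e1, e2, e3⟩ := hval x y hxy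
      simp only [χ, I, e3, Finset.mem_union, Finset.mem_Icc]
      congr 1
      apply propext
      omega
  have habs : ∀ i, i ∉ ({p, q} : Set ℕ) → Absent χ i := by
    intro i hi x y _ h
    simp only [Set.mem_insert_iff, Set.mem_singleton_iff, not_or] at hi
    simp only [χ] at h
    split_ifs at h
    · exact hi.1 h.symm
    · exact hi.2 h.symm
  have hlow : ∀ i, Low χ i m := by
    intro i
    by_cases hi : i ∈ ({p, q} : Set ℕ)
    · refine ⟨fun f hf => ?_, fun v T hT => ?_⟩
      · have := Finset.card_le_card_of_injOn (s := Finset.range m) (t := Finset.univ) f (by simp)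
          (by intro a ha b hb; simp at ha hb; exact hf.1 a ha b hb)
        simp [ZMod.card] at this
        omega
      · have hinj : Set.InjOn (fun u : ZMod c => (v - u).val) T := by
          intro a _ b _ hab
          have := ZMod.val_injective c hab
          simpa using this
        rcases hi with rfl | hi
        · have := Finset.card_le_card_of_injOn (s := T) (t := I) _ (by
            intro u hu
            have := (hT u hu).2
            simp only [χ] at this
            by_contra hc
            rw [if_neg (by simpa using hc)] at this
            exact hpq this.symm) hinj
          have h3 : I.card ≤ w + w := by
            refine (Finset.card_union_le _ _).trans ?_
            simp only [Nat.card_Icc]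
            omega
          omega
        · have hi : i = q := hi
          subst hi
          have := Finset.card_le_card_of_injOn (s := T) (t := Finset.Icc (w + 1) (c - w - 1)) _ (by
            intro u hu
            have h4 := hT u hu
            obtain ⟨e1, e2, e3⟩ := hval v u h4.1
            have : (v - u).val ∉ I := by
              intro hc
              have := h4.2
              simp only [χ] at this
              rw [if_pos hc] at this
              exact hpq this
            simp only [I, Finset.mem_union, Finset.mem_Icc] at this
            simp only [Finset.coe_Icc, Set.mem_Icc]
            omega) hinj
          simp only [Nat.card_Icc] at this
          omega
    · exact (habs i hi).low (by omega)
  refine ⟨ZMod c, inferInstance, χ, ZMod.card c, hsymm, ?_, fun i => (hlow i).good, habs,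
    fun i _ => hlow i⟩
  intro x y z _ _ _
  simp only [χ]
  split_ifs <;> simp

lemma Col.mono {m N : ℕ} {U L U' L' : Set ℕ} (h : Col m N U L) (hU : U ⊆ U') (hL : L' ⊆ L) :
    Col m N U' L' := by
  obtain ⟨V, inst, χ, h1, h2, h3, h4, h5, h6⟩ := h
  exact ⟨V, inst, χ, h1, h2, h3, h4, fun i hi => h5 i fun h => hi (hU h), fun i hi => h6 i (hL hi)⟩

lemma col_F {m c : ℕ} (hm : 2 ≤ m) (hme : m % 2 = 0)
    (h0 : ∀ p q, p ≠ q → Col m c {p, q} Set.univ) (s : ℕ) :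
    ∀ p q, p ≠ q → 2 * s ≤ p → 2 * s ≤ q →
      Col m (5 ^ s * c) {i | i < 2 * s ∨ i = p ∨ i = q} {i | 2 * s ≤ i} := by
  induction s with
  | zero =>
    intro p q hpq _ _
    simpa using (h0 p q hpq).mono (L' := {i | 0 ≤ i}) (U' := {i | i = p ∨ i = q})
      (by intro i; simp) (by simp)
  | succ s ih =>
    intro p q hpq hp hq
    have h := ih p q hpq (by omega) (by omega)
    have := Col.pent hm hme (a := 2 * s) (b := 2 * s + 1) (by omega) h h h
      (by simp; omega) (by simp; omega) (by simp) (by simp; omega) (by simp; omega) (by simp)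
      {i | i < 2 * (s + 1) ∨ i = p ∨ i = q} {i | 2 * (s + 1) ≤ i}
      (by intro i hi; simp only [Set.mem_ofPred_eq] at *; omega)
      (by intro i hi; simp only [Set.mem_ofPred_eq] at *; omega)
    convert this using 1
    ring

lemma col_L {m c : ℕ} (hm : 2 ≤ m) (hme : m % 2 = 0)
    (h0 : ∀ p q, p ≠ q → Col m c {p, q} Set.univ) (s : ℕ) :
    ∀ z, 2 * s ≤ z →
      Col m (m / 2 + (5 ^ s - 1) * c) {i | i < 2 * s ∨ i = z} {i | 2 * s ≤ i} := by
  induction s with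
  | zero =>
    intro z _
    simpa using (col_clique hm z).mono (L' := {i | 0 ≤ i}) (U' := {i | i = z})
      (by intro i; simp) (by simp)
  | succ s ih =>
    intro z hz
    have h := ih z (by omega)
    have hA := col_F hm hme h0 s (2 * s) z (by omega) (by omega) (by omega)
    have hB := col_F hm hme h0 s (2 * s + 1) z (by omega) (by omega) (by omega)
    have := Col.pent hm hme (a := 2 * s) (b := 2 * s + 1) (by omega) h hA hB
      (by simp; omega) (by simp; omega) (by simp) (by simp; omega) (by simp; omega) (by simp)
      {i | i < 2 * (s + 1) ∨ i = z} {i | 2 * (s + 1) ≤ i}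
      (by intro i hi; simp only [Set.mem_ofPred_eq] at *; omega)
      (by intro i hi; simp only [Set.mem_ofPred_eq] at *; omega)
    convert this using 1
    obtain ⟨e, he⟩ : ∃ e, 5 ^ s = e + 1 := ⟨5 ^ s - 1, by have : 0 < 5 ^ s := by positivity
                                                          omega⟩
    have h5 : 5 ^ (s + 1) - 1 = 5 * e + 4 := by rw [pow_succ, he]; omega
    rw [h5, he]
    simp only [Nat.add_sub_cancel]
    ring

/-- Size of the even-colored construction. -/
def sizeM (m c n : ℕ) : ℕ → ℕ
  | 0 => n
  | t + 1 => sizeM m c n t + 4 * (m / 2 + (5 ^ (t + 1) - 1) * c)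

lemma col_M {m c n : ℕ} (hm : 2 ≤ m) (hme : m % 2 = 0)
    (h0 : ∀ p q, p ≠ q → Col m c {p, q} Set.univ) (hn : Col m n {i | i < 2} ∅) (t : ℕ) :
    Col m (sizeM m c n t) {i | i < 2 * t + 2} ∅ := by
  induction t with
  | zero => simpa [sizeM] using hn
  | succ t ih =>
    have hA := col_L hm hme h0 (t + 1) (2 * t + 2) (by omega)
    have hB := col_L hm hme h0 (t + 1) (2 * t + 3) (by omega)
    have := Col.pent hm hme (a := 2 * t + 2) (b := 2 * t + 3) (by omega) ih hA hB
      (by simp) (by simp) (by simp; omega) (by simp; omega) (by simp; omega) (by simp; omega)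
      {i | i < 2 * (t + 1) + 2} ∅
      (by intro i hi; simp only [Set.mem_ofPred_eq] at *; omega)
      (by simp)
    convert this using 1
    simp only [sizeM]
    ring

lemma sizeM_eq {m c d n : ℕ} (hd : 2 * c = d + m) (hme : m % 2 = 0) (t : ℕ) :
    sizeM m c n t + 2 * d * t = n + 5 * c * (5 ^ t - 1) := by
  induction t with
  | zero => simp [sizeM]
  | succ t ih =>
    obtain ⟨e, he⟩ : ∃ e, 5 ^ t = e + 1 := ⟨5 ^ t - 1, by have : 0 < 5 ^ t := by positivity
                                                          omega⟩
    have h5 : 5 ^ (t + 1) - 1 = 5 * e + 4 := by rw [pow_succ, he]; omega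
    simp only [sizeM]
    rw [h5]
    rw [he] at ih
    simp only [Nat.add_sub_cancel] at ih
    obtain ⟨h, rfl⟩ : ∃ h, m = 2 * h := ⟨m / 2, by omega⟩
    rw [Nat.mul_div_cancel_left h (by omega)]
    have : d = 2 * c - 2 * h := by omega
    nlinarith

lemma kipas_adj {m : ℕ} (a b : Fin (m + 1)) : (kipasG m).Adj a b ↔
    a ≠ b ∧ ((a = 0 ∨ (1 ≤ a.val ∧ b.val = a.val + 1)) ∨
      (b = 0 ∨ (1 ≤ b.val ∧ a.val = b.val + 1))) := by
  simp [kipasG, SimpleGraph.fromRel_adj]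

/-- A two-coloring without kipas, as a `Col`. -/
lemma col_base {m n : ℕ} (χ : Fin n → Fin n → Fin 2) (hs : ∀ x y, χ x y = χ y x)
    (h : ¬ IsMonoCopy (⊤ : SimpleGraph (Fin n)) χ (kipasG m)) : Col m n {i | i < 2} ∅ := by
  refine ⟨Fin n, inferInstance, fun x y => (χ x y).val, by simp, fun x y => by simp only [hs x y], ?_, ?_,
    ?_, by simp⟩
  · intro x y z _ _ _
    have h1 := (χ x y).isLt
    have h2 := (χ y z).isLt
    have h3 := (χ x z).isLt
    simp only
    omega
  · intro i v p hp hv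
    apply h
    rcases Nat.eq_zero_or_pos m with rfl | hm
    · refine ⟨fun _ => v, 0, fun a b _ => Subsingleton.elim (α := Fin 1) a b, fun a b hab => ?_⟩
      exact absurd (Subsingleton.elim (α := Fin 1) a b) hab.ne
    refine ⟨fun a => if a = 0 then v else p (a.val - 1), χ v (p 0), ?_, ?_⟩
    · intro a b hab
      have ha := a.isLt
      have hb := b.isLt
      simp only at hab
      by_cases h0 : a = 0 <;> by_cases h1 : b = 0
      · rw [h0, h1]
      · rw [if_pos h0, if_neg h1] at hab
        exact absurd hab (hv _ (by omega)).1
      · rw [if_neg h0, if_pos h1] at hab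
        exact absurd hab.symm (hv _ (by omega)).1
      · rw [if_neg h0, if_neg h1] at hab
        have := hp.1 _ (by omega) _ (by omega) hab
        rw [← ne_eq, ← Fin.val_ne_zero_iff] at h0 h1
        apply Fin.ext
        omega
    · have hi : (χ v (p 0)).val = i := (hv 0 hm).2
      have key : ∀ a b : Fin (m + 1), a ≠ b → (a = 0 ∨ (1 ≤ a.val ∧ b.val = a.val + 1)) →
          (if a = 0 then v else p (a.val - 1)) ≠ (if b = 0 then v else p (b.val - 1)) ∧
          χ (if a = 0 then v else p (a.val - 1)) (if b = 0 then v else p (b.val - 1)) =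
            χ v (p 0) := by
        intro a b hne hab
        have ha := a.isLt
        have hb := b.isLt
        rcases hab with rfl | ⟨h1, h2⟩
        · rw [if_pos rfl, if_neg hne.symm]
          have := hv (b.val - 1) (by omega)
          exact ⟨this.1, Fin.ext (this.2.trans hi.symm)⟩
        · have a0 : a ≠ 0 := by rw [← Fin.val_ne_zero_iff]; omega
          have b0 : b ≠ 0 := by rw [← Fin.val_ne_zero_iff]; omega
          rw [if_neg a0, if_neg b0]
          have e : b.val - 1 = (a.val - 1) + 1 := by omega
          rw [e]
          refine ⟨fun hc => ?_, Fin.ext ((hp.2 _ (by omega)).trans hi.symm)⟩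
          have := hp.1 _ (by omega) _ (by omega) hc
          omega
      intro a b hab
      rw [kipas_adj] at hab
      rw [SimpleGraph.top_adj]
      rcases hab with ⟨hne, hab | hab⟩
      · exact key a b hne hab
      · have := key b a hne.symm hab
        exact ⟨this.1.symm, (hs _ _).trans this.2⟩
  · intro i hi x y _ hc
    simp only [Set.mem_ofPred_eq] at hi
    have := (χ x y).isLt
    simp only at hc
    omega

/-- Back to colorings of `Fin N`. -/
lemma Col.toFin {m N k : ℕ} (hk : 0 < k) {U L : Set ℕ} (h : Col m N U L)
    (hU : ∀ i ∈ U, i < k) :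
    ∃ χ : Fin N → Fin N → Fin k, (∀ x y, χ x y = χ y x) ∧
      NoRainbowTriangle (⊤ : SimpleGraph (Fin N)) χ ∧
      ¬ IsMonoCopy (⊤ : SimpleGraph (Fin N)) χ (kipasG m) := by
  obtain ⟨V, inst, χ, hcard, hsymm, hgal, hgood, habs, -⟩ := h
  have e : Fin N ≃ V := (Fintype.equivFinOfCardEq hcard).symm
  have hlt : ∀ x y : V, x ≠ y → χ x y < k := by
    intro x y hxy
    apply hU
    by_contra hc
    exact habs _ hc x y hxy rfl
  refine ⟨fun x y => ⟨χ (e x) (e y) % k, Nat.mod_lt _ hk⟩, ?_, ?_, ?_⟩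
  · intro x y
    simp only [hsymm (e x) (e y)]
  · rintro ⟨x, y, z, hxy, hyz, hxz, h1, h2, h3⟩
    simp only [ne_eq, Fin.mk.injEq] at h1 h2 h3
    rcases hgal (e x) (e y) (e z) (e.injective.ne hxy) (e.injective.ne hyz) (e.injective.ne hxz)
      with h | h | h
    · exact h1 (by rw [h])
    · exact h2 (by rw [h])
    · exact h3 (by rw [h])
  · rintro ⟨f, i, hf, h⟩
    have key : ∀ a b, (kipasG m).Adj a b → e (f a) ≠ e (f b) ∧ χ (e (f a)) (e (f b)) = i.val := by
      intro a b hab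
      obtain ⟨h1, h2⟩ := h a b hab
      have hne := e.injective.ne h1
      refine ⟨hne, ?_⟩
      rw [← h2]
      simp only [Nat.mod_eq_of_lt (hlt _ _ hne)]
    have hg : ∀ j < m, (if hj : j < m then (⟨j + 1, by omega⟩ : Fin (m + 1)) else 0).val = j + 1 := by
      intro j hj
      rw [dif_pos hj]
    set g : ℕ → Fin (m + 1) := fun j => if hj : j < m then ⟨j + 1, by omega⟩ else 0 with hgdef
    refine hgood i.val (e (f 0)) (fun j => e (f (g j))) ⟨?_, ?_⟩ ?_
    · intro a ha b hb hab
      have := congrArg Fin.val (hf (e.injective hab))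
      have h1 := hg a ha
      have h2 := hg b hb
      simp only [hgdef] at this
      omega
    · intro j hj
      have h1 : (g j).val = j + 1 := hg j (by omega)
      have h2 : (g (j + 1)).val = j + 1 + 1 := hg (j+1) hj
      refine (key _ _ ?_).2
      rw [kipas_adj]
      refine ⟨fun h => ?_, Or.inl (Or.inr ⟨by omega, by omega⟩)⟩
      rw [h] at h1
      omega
    · intro j hj
      have h1 : (g j).val = j + 1 := hg j hj
      refine key _ _ ?_
      rw [kipas_adj]
      refine ⟨fun h => ?_, Or.inl (Or.inl rfl)⟩
      rw [← h] at h1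
      simp at h1

/-- Multicolor Ramsey, in the form of an induction on the total size of the cliques. -/
lemma ramsey_aux (k : ℕ) (L : ℕ) : ∃ N, ∀ (V : Type) (χ : V → V → Fin k),
    (∀ x y, χ x y = χ y x) → ∀ S : Finset V, N ≤ S.card →
    ∃ T : Fin k → Finset V, (∀ i, T i ⊆ S) ∧
      (∀ i, ∀ x ∈ T i, ∀ y ∈ T i, x ≠ y → χ x y = i) ∧ L ≤ ∑ i, (T i).card := by
  classical
  induction L with
  | zero => exact ⟨0, fun V χ _ S _ => ⟨fun _ => ∅, by simp, by simp, by simp⟩⟩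
  | succ L ih =>
    obtain ⟨N, hN⟩ := ih
    refine ⟨k * N + 2, fun V χ hχ S hS => ?_⟩
    obtain ⟨v, hv⟩ : S.Nonempty := Finset.card_pos.1 (by omega)
    have hcard : (Finset.univ : Finset (Fin k)).card * N < (S.erase v).card := by
      rw [Finset.card_erase_of_mem hv]
      simp
      omega
    obtain ⟨i, -, hi⟩ := Finset.exists_lt_card_fiber_of_mul_lt_card_of_maps_to
      (s := S.erase v) (f := fun u => χ v u) (fun _ _ => Finset.mem_univ _) hcard
    obtain ⟨T, hT1, hT2, hT3⟩ := hN V χ hχ _ hi.le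
    have hTi : ∀ j, ∀ x ∈ T j, x ≠ v ∧ x ∈ S ∧ χ v x = i := by
      intro j x hx
      have := hT1 j hx
      simp only [Finset.mem_filter, Finset.mem_erase] at this
      exact ⟨this.1.1, this.1.2, this.2⟩
    refine ⟨Function.update T i (insert v (T i)), fun j => ?_, fun j => ?_, ?_⟩
    · by_cases hj : j = i
      · subst hj
        rw [Function.update_self]
        intro x hx
        rcases Finset.mem_insert.1 hx with rfl | hx
        · exact hv
        · exact (hTi _ x hx).2.1
      · rw [Function.update_of_ne hj]
        exact fun x hx => (hTi _ x hx).2.1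
    · by_cases hj : j = i
      · subst hj
        rw [Function.update_self]
        intro x hx y hy hxy
        rcases Finset.mem_insert.1 hx with hx | hx <;> rcases Finset.mem_insert.1 hy with hy | hy
        · exact absurd (hx.trans hy.symm) hxy
        · rw [hx]; exact (hTi _ y hy).2.2
        · rw [hχ, hy]; exact (hTi _ x hx).2.2
        · exact hT2 _ x hx y hy hxy
      · rw [Function.update_of_ne hj]
        exact hT2 j
    · refine lt_of_le_of_lt hT3 (Finset.sum_lt_sum (fun j _ => ?_) ⟨i, Finset.mem_univ _, ?_⟩)
      · by_cases hj : j = i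
        · subst hj
          rw [Function.update_self]
          exact Finset.card_le_card (Finset.subset_insert _ _)
        · rw [Function.update_of_ne hj]
      · rw [Function.update_self, Finset.card_insert_of_notMem]
        · omega
        · exact fun h => (hTi _ v h).1 rfl

lemma ramsey_exists (k s : ℕ) (H : SimpleGraph (Fin s)) : ∃ N, ∀ χ : Fin N → Fin N → Fin k,
    (∀ x y, χ x y = χ y x) → IsMonoCopy (⊤ : SimpleGraph (Fin N)) χ H := by
  obtain ⟨N, hN⟩ := ramsey_aux k (k * s + 1)
  refine ⟨N, fun χ hχ => ?_⟩
  obtain ⟨T, -, h2, h3⟩ := hN (Fin N) χ hχ Finset.univ (by simp)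
  obtain ⟨i, hi⟩ : ∃ i, s ≤ (T i).card := by
    by_contra hc
    push Not at hc
    have : ∑ i, (T i).card ≤ ∑ _i : Fin k, s := Finset.sum_le_sum fun i _ => (hc i).le
    simp at this
    omega
  let f : Fin s → Fin N := fun a => (T i).orderEmbOfFin rfl (Fin.castLE hi a)
  have hf : Function.Injective f := fun a b h => by
    have := (T i).orderEmbOfFin rfl |>.injective h
    exact Fin.castLE_injective hi this
  have hm : ∀ a, f a ∈ T i := fun a => Finset.orderEmbOfFin_mem _ _ _
  exact ⟨f, i, hf, fun a b hab => ⟨hf.ne hab.ne, h2 i _ (hm a) _ (hm b) (hf.ne hab.ne)⟩⟩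

lemma gr_lower {k m N : ℕ}
    (h : ∃ χ : Fin N → Fin N → Fin k, (∀ x y, χ x y = χ y x) ∧
      NoRainbowTriangle (⊤ : SimpleGraph (Fin N)) χ ∧
      ¬ IsMonoCopy (⊤ : SimpleGraph (Fin N)) χ (kipasG m)) :
    N < GallaiRamsey k (kipasG m) := by
  obtain ⟨χ, hs, hr, hc⟩ := h
  have hne : {N | ∀ c : Fin N → Fin N → Fin k, (∀ x y, c x y = c y x) →
      NoRainbowTriangle (⊤ : SimpleGraph (Fin N)) c →
      IsMonoCopy (⊤ : SimpleGraph (Fin N)) c (kipasG m)}.Nonempty := by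
    obtain ⟨N, hN⟩ := ramsey_exists k (m + 1) (kipasG m)
    exact ⟨N, fun c hc _ => hN c hc⟩
  have hmem := Nat.sInf_mem hne
  by_contra hlt
  push Not at hlt
  change GallaiRamsey k (kipasG m) ∈ _ at hmem
  generalize GallaiRamsey k (kipasG m) = M at hmem hlt
  let e : Fin M → Fin N := Fin.castLE hlt
  have he : Function.Injective e := Fin.castLE_injective hlt
  obtain ⟨f, i, hf, h⟩ := hmem (fun x y => χ (e x) (e y)) (fun x y => hs _ _) (by
    rintro ⟨x, y, z, hxy, hyz, hxz, hh⟩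
    exact hr ⟨e x, e y, e z, he.ne hxy, he.ne hyz, he.ne hxz, hh⟩)
  exact hc ⟨e ∘ f, i, he.comp hf, fun a b hab => ⟨he.ne (h a b hab).1, (h a b hab).2⟩⟩

lemma main_col (k m n c d : ℕ) (hk : 5 ≤ k) (hko : k % 2 = 1)
    (hm : 6 ≤ m) (hme : m % 2 = 0)
    (hcd : (m % 4 = 0 ∧ c = m - 2 ∧ d = m - 4) ∨ (m % 4 = 2 ∧ c = m - 1 ∧ d = m - 2))
    (h2 : ∃ χ : Fin n → Fin n → Fin 2, (∀ x y, χ x y = χ y x) ∧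
      ¬ IsMonoCopy (⊤ : SimpleGraph (Fin n)) χ (kipasG m)) (N : ℕ)
    (hN : N + 2 * d * (k - 3) = 2 * n + 10 * c * (5 ^ ((k - 3) / 2) - 1)) :
    ∃ χ : Fin N → Fin N → Fin k, (∀ x y, χ x y = χ y x) ∧
      NoRainbowTriangle (⊤ : SimpleGraph (Fin N)) χ ∧
      ¬ IsMonoCopy (⊤ : SimpleGraph (Fin N)) χ (kipasG m) := by
  obtain ⟨χ, hs, hχ⟩ := h2
  obtain ⟨t, rfl⟩ : ∃ t, k = 2 * t + 3 := ⟨(k - 3) / 2, by omega⟩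
  have e1 : 2 * t + 3 - 3 = 2 * t := by omega
  have e2 : 2 * t / 2 = t := by omega
  rw [e1, e2] at hN
  have h0 : ∀ p q, p ≠ q → Col m c {p, q} Set.univ := by
    intro p q hpq
    refine col_cluster (w := (m / 2 - 1) / 2) ?_ ?_ ?_ ?_ ?_ p q hpq <;> omega
  have h := (col_M (by omega) hme h0 (col_base χ hs hχ) t).double (a := 2 * t + 2) (by omega) hme
    (by simp)
  have hsz := sizeM_eq (m := m) (c := c) (d := d) (n := n) (by omega) hme t
  have : N = 2 * sizeM m c n t := by
    nlinarith
  rw [this]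
  refine h.toFin (by omega) ?_
  intro i hi
  simp only [Set.mem_insert_iff, Set.mem_ofPred_eq] at hi
  omega

lemma pow_bound {k c d : ℕ} (hko : k % 2 = 1) (hk : 5 ≤ k) (hdc : d ≤ c) :
    d * (k - 3) ≤ 5 * c * (5 ^ ((k - 3) / 2) - 1) := by
  obtain ⟨t, rfl⟩ : ∃ t, k = 2 * t + 3 := ⟨(k - 3) / 2, by omega⟩
  have e1 : 2 * t + 3 - 3 = 2 * t := by omega
  have e2 : 2 * t / 2 = t := by omega
  rw [e1, e2]
  have : t < 5 ^ t := Nat.lt_pow_self (by omega)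
  have h3 : t ≤ 5 ^ t - 1 := by omega
  calc d * (2 * t) ≤ c * (2 * (5 ^ t - 1)) := Nat.mul_le_mul hdc (by omega)
    _ ≤ 5 * c * (5 ^ t - 1) := by nlinarith [Nat.zero_le (c * (5 ^ t - 1))]

end KG

/-- Odd `k ≥ 5`, even `m ≥ 6`: from a 2-coloring of `K_n` with no monochromatic
kipas `K̂_m`, one gets a Gallai `k`-coloring of a larger complete graph with no
monochromatic `K̂_m`; consequently the Gallai–Ramsey lower bound. -/
theorem kipas_gallai_lower_odd_k (k m n c d : ℕ) (hk : 5 ≤ k) (hko : k % 2 = 1)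
    (hm : 6 ≤ m) (hme : m % 2 = 0)
    (hcd : (m % 4 = 0 ∧ c = m - 2 ∧ d = m - 4) ∨ (m % 4 = 2 ∧ c = m - 1 ∧ d = m - 2))
    (h2 : ∃ χ : Fin n → Fin n → Fin 2, (∀ x y, χ x y = χ y x) ∧
      ¬ IsMonoCopy (⊤ : SimpleGraph (Fin n)) χ (kipasG m)) :
    (∃ χ : Fin (2 * n + 10 * c * (5 ^ ((k - 3) / 2) - 1) - 2 * d * (k - 3)) →
        Fin (2 * n + 10 * c * (5 ^ ((k - 3) / 2) - 1) - 2 * d * (k - 3)) → Fin k,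
      (∀ x y, χ x y = χ y x) ∧
      NoRainbowTriangle (⊤ : SimpleGraph (Fin (2 * n + 10 * c * (5 ^ ((k - 3) / 2) - 1) - 2 * d * (k - 3)))) χ ∧
      ¬ IsMonoCopy (⊤ : SimpleGraph (Fin (2 * n + 10 * c * (5 ^ ((k - 3) / 2) - 1) - 2 * d * (k - 3)))) χ (kipasG m)) ∧
    2 * (Ramsey2 (kipasG m) + 5 * c * (5 ^ ((k - 3) / 2) - 1) - d * (k - 3)) - 1 ≤
      GallaiRamsey k (kipasG m) := by
  have hb := KG.pow_bound (k := k) (c := c) (d := d) hko hk (by omega)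
  have hA : 2 * d * (k - 3) = 2 * (d * (k - 3)) := by ring
  have hB : 10 * c * (5 ^ ((k - 3) / 2) - 1) = 2 * (5 * c * (5 ^ ((k - 3) / 2) - 1)) := by ring
  refine ⟨KG.main_col k m n c d hk hko hm hme hcd h2 _ (by omega), ?_⟩
  have h2' : ∃ χ : Fin (Ramsey2 (kipasG m) - 1) → Fin (Ramsey2 (kipasG m) - 1) → Fin 2,
      (∀ x y, χ x y = χ y x) ∧
      ¬ IsMonoCopy (⊤ : SimpleGraph (Fin (Ramsey2 (kipasG m) - 1))) χ (kipasG m) := by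
    rcases Nat.eq_zero_or_pos (Ramsey2 (kipasG m)) with h0 | hpos
    · rw [h0]
      exact ⟨fun _ _ => 0, fun _ _ => rfl, fun ⟨f, _⟩ => (f 0).elim0⟩
    · have : Ramsey2 (kipasG m) - 1 < Ramsey2 (kipasG m) := by omega
      have := Nat.notMem_of_lt_sInf this
      simp only [Set.mem_ofPred_eq, not_forall] at this
      obtain ⟨χ, hs, hχ⟩ := this
      exact ⟨χ, hs, hχ⟩
  have := KG.gr_lower (KG.main_col k m _ c d hk hko hm hme hcd h2'
    (2 * (Ramsey2 (kipasG m) - 1) + 10 * c * (5 ^ ((k - 3) / 2) - 1) - 2 * d * (k - 3)) (by omega))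
  omega
end

section
/- Let k ≥ 2 be even and let m ≥ 7 be odd. Set c = m−3 and d = m−5 if m ≡ 1 (mod 4), and c = m−2 and d = m−3 if m ≡ 3 (mod 4). Suppose there exists an edge 2-coloring of the complete graph on n vertices with no monochromatic copy of the kipas K̂_m. Then there exists a Gallai k-coloring of the complete graph on n + 5c(5^((k−2)/2) − 1) − d(k−2) vertices with no monochromatic copy of K̂_m. Consequently GR_k(K̂_m) ≥ R_2(K̂_m) + 5c(5^((k−2)/2) − 1) − d(k−2). -/
open SimpleGraph

namespace KipasAux

/-- Color `i` does not occur. -/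
def P0 {V : Type} (χ : V → V → ℕ) (i : ℕ) : Prop := ∀ v w, v ≠ w → χ v w ≠ i

/-- a path on `m` vertices in color `i`. -/
def IsPth {V : Type} (m : ℕ) (χ : V → V → ℕ) (i : ℕ) (g : ℕ → V) : Prop :=
  (∀ a b, a < m → b < m → g a = g b → a = b) ∧ ∀ a, a + 1 < m → χ (g a) (g (a + 1)) = i

/-- Color `i` has small degrees and no path on `m` vertices. -/
def P1 {V : Type} (m : ℕ) (χ : V → V → ℕ) (i : ℕ) : Prop :=
  (∀ v, ∀ s : Finset V, (∀ w ∈ s, w ≠ v ∧ χ v w = i) → s.card ≤ (m - 3) / 2) ∧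
    ∀ g, ¬ IsPth m χ i g

/-- Color `i` contains no kipas. -/
def P2 {V : Type} (m : ℕ) (χ : V → V → ℕ) (i : ℕ) : Prop :=
  ∀ v g, IsPth m χ i g → ¬ ∀ a, a < m → v ≠ g a ∧ χ v (g a) = i

/-- Status of a color. -/
def Sat {V : Type} (m : ℕ) (χ : V → V → ℕ) (i : ℕ) : ℕ → Prop
  | 0 => P0 χ i
  | 1 => P1 m χ i
  | _ + 2 => P2 m χ i

theorem P0.to1 {V : Type} {m : ℕ} (hm : 7 ≤ m) {χ : V → V → ℕ} {i : ℕ} (h : P0 χ i) :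
    P1 m χ i := by
  refine ⟨fun v s hs => ?_, fun g hg => ?_⟩
  · have : s = ∅ := by
      apply Finset.eq_empty_of_forall_notMem
      intro w hw
      exact h v w (hs w hw).1.symm (hs w hw).2
    simp [this]
  · refine h (g 0) (g 1) (fun e => ?_) (hg.2 0 (by omega))
    have := hg.1 0 1 (by omega) (by omega) e
    omega

theorem P1.to2 {V : Type} {m : ℕ} {χ : V → V → ℕ} {i : ℕ} (h : P1 m χ i) :
    P2 m χ i := fun _ g hg _ => h.2 g hg

theorem Sat.mono {V : Type} {m : ℕ} (hm : 7 ≤ m) {χ : V → V → ℕ} {i s t : ℕ}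
    (h : Sat m χ i s) (hst : s ≤ t) : Sat m χ i t := by
  rcases s with _ | _ | s <;> rcases t with _ | _ | t
  · exact h
  · exact P0.to1 hm h
  · exact (P0.to1 hm h).to2
  · omega
  · exact h
  · exact P1.to2 h
  · omega
  · omega
  · exact h

def Sym {V : Type} (χ : V → V → ℕ) : Prop := ∀ x y, χ x y = χ y x

def Gal {V : Type} (χ : V → V → ℕ) : Prop :=
  ∀ x y z, x ≠ y → y ≠ z → x ≠ z → χ x y = χ y z ∨ χ y z = χ x z ∨ χ x y = χ x z

/-- there is a Gallai coloring on `N` vertices with the given statuses -/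
def Has (m N : ℕ) (s : ℕ → ℕ) : Prop :=
  ∃ (V : Type) (_ : Fintype V) (χ : V → V → ℕ), Fintype.card V = N ∧ Sym χ ∧ Gal χ ∧
    ∀ i, Sat m χ i (s i)

/-- blow-up of the five-cycle coloring -/
def T (a b : ℕ) (p q : Fin 5) : ℕ := if p - q = 1 ∨ q - p = 1 then a else b

def comb {V : Fin 5 → Type} (χ : ∀ p, V p → V p → ℕ) (a b : ℕ) (x y : Σ p, V p) : ℕ :=
  if h : y.1 = x.1 then χ x.1 x.2 (h ▸ y.2) else T a b x.1 y.1

theorem comb_same {V : Fin 5 → Type} (χ : ∀ p, V p → V p → ℕ) (a b : ℕ) (p) (x y : V p) :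
    comb χ a b ⟨p, x⟩ ⟨p, y⟩ = χ p x y := by simp [comb]

theorem comb_diff {V : Fin 5 → Type} (χ : ∀ p, V p → V p → ℕ) (a b : ℕ) (x y : Σ p, V p)
    (h : x.1 ≠ y.1) : comb χ a b x y = T a b x.1 y.1 := by
  simp [comb, Ne.symm h]

theorem T_symm (a b p q) : T a b p q = T a b q p := by
  unfold T; simp only [or_comm]

theorem T_mem (a b p q) : T a b p q = a ∨ T a b p q = b := by
  unfold T; split_ifs <;> simp

theorem comb_sym {V : Fin 5 → Type} {χ : ∀ p, V p → V p → ℕ} (h : ∀ p, Sym (χ p)) (a b : ℕ) :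
    Sym (comb χ a b) := by
  rintro ⟨p, x⟩ ⟨q, y⟩
  by_cases e : p = q
  · subst e; rw [comb_same, comb_same, h]
  · rw [comb_diff _ _ _ _ _ e, comb_diff _ _ _ _ _ (Ne.symm e), T_symm]

theorem comb_gal {V : Fin 5 → Type} {χ : ∀ p, V p → V p → ℕ} (h : ∀ p, Gal (χ p)) (a b : ℕ) :
    Gal (comb χ a b) := by
  rintro ⟨p, x⟩ ⟨q, y⟩ ⟨r, z⟩ h1 h2 h3
  by_cases e : p = q
  · subst e
    by_cases e' : p = r
    · subst e'
      simp only [comb_same]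
      exact h p x y z (by simpa using h1) (by simpa using h2) (by simpa using h3)
    · right; left
      rw [comb_diff _ _ _ ⟨p, y⟩ ⟨r, z⟩ e', comb_diff _ _ _ ⟨p, x⟩ ⟨r, z⟩ e']
  · by_cases e' : p = r
    · subst e'
      left
      rw [comb_diff _ _ _ _ _ e, comb_diff _ _ _ _ _ (Ne.symm e), T_symm]
    · by_cases e2 : q = r
      · subst e2
        right; right
        rw [comb_diff _ _ _ ⟨p, x⟩ ⟨q, y⟩ e, comb_diff _ _ _ ⟨p, x⟩ ⟨q, z⟩ e]
      · rw [comb_diff _ _ _ ⟨p, x⟩ ⟨q, y⟩ e, comb_diff _ _ _ ⟨p, x⟩ ⟨r, z⟩ e',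
          comb_diff _ _ _ ⟨q, y⟩ ⟨r, z⟩ e2]
        have A := T_mem a b p q
        have B := T_mem a b p r
        have C := T_mem a b q r
        dsimp only
        omega

/-- a path within one part -/
theorem path_part {V : Fin 5 → Type} {χ : ∀ p, V p → V p → ℕ} {a b m i : ℕ} (hm : 7 ≤ m)
    {g : ℕ → Σ p, V p} (hg : IsPth m (comb χ a b) i g) {p : Fin 5}
    (hp : ∀ t, t < m → (g t).1 = p) :
    ∃ g' : ℕ → V p, IsPth m (χ p) i g' ∧ ∀ t, t < m → g t = ⟨p, g' t⟩ := by
  have : ∀ t, ∃ y : V p, t < m → g t = ⟨p, y⟩ := by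
    intro t
    by_cases ht : t < m
    · have := hp t ht
      rcases hgt : g t with ⟨q, y⟩
      rw [hgt] at this
      dsimp at this
      subst this
      exact ⟨y, fun _ => rfl⟩
    · have := hp 0 (by omega)
      rcases hgt : g 0 with ⟨q, y⟩
      rw [hgt] at this
      dsimp at this
      subst this
      exact ⟨y, fun h => absurd h ht⟩
  choose g' hg' using this
  refine ⟨g', ⟨fun s t hs ht e => hg.1 s t hs ht ?_, fun t ht => ?_⟩, hg'⟩
  · rw [hg' s hs, hg' t ht, e]
  · have := hg.2 t ht
    rw [hg' t (by omega), hg' (t + 1) ht, comb_same] at this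
    exact this

theorem const_of_step {α : Type} (m : ℕ) (f : ℕ → α) (h : ∀ t, t + 1 < m → f (t + 1) = f t) :
    ∀ t, t < m → f t = f 0 := by
  intro t
  induction t with
  | zero => intro _; rfl
  | succ t ih => intro ht; rw [h t ht, ih (by omega)]

/-- degree bound inside a part -/
theorem deg_part {V : Fin 5 → Type} {χ : ∀ p, V p → V p → ℕ} {a b m i : ℕ} {p : Fin 5}
    (h : P1 m (χ p) i) (x : V p) (S : Finset (Σ p, V p)) (hin : ∀ w ∈ S, ∃ y, w = ⟨p, y⟩)
    (hS : ∀ w ∈ S, w ≠ ⟨p, x⟩ ∧ comb χ a b ⟨p, x⟩ w = i) : S.card ≤ (m - 3) / 2 := by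
  classical
  have := h.1 x (S.preimage (Sigma.mk p) (sigma_mk_injective.injOn)) (by
    intro w hw
    have := hS _ (Finset.mem_preimage.1 hw)
    rw [comb_same] at this
    exact ⟨fun e => this.1 (by rw [e]), this.2⟩)
  rw [Finset.card_preimage, Finset.filter_true_of_mem] at this
  · exact this
  · intro w hw
    obtain ⟨y, rfl⟩ := hin w hw
    exact ⟨y, rfl⟩

/-- old colors keep their status -/
theorem comb_old {V : Fin 5 → Type} {χ : ∀ p, V p → V p → ℕ} {a b m i : ℕ} (hm : 7 ≤ m)
    (hia : i ≠ a) (hib : i ≠ b) (s : ℕ) (h : ∀ p, Sat m (χ p) i s) :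
    Sat m (comb χ a b) i s := by
  have key : ∀ x y : Σ p, V p, comb χ a b x y = i → y.1 = x.1 := by
    intro x y e
    by_contra hne
    rw [comb_diff _ _ _ _ _ (Ne.symm hne)] at e
    rcases T_mem a b x.1 y.1 with h | h <;> omega
  have keyp : ∀ g, IsPth m (comb χ a b) i g → ∀ t, t < m → (g t).1 = (g 0).1 := by
    intro g hg
    exact const_of_step m (fun t => (g t).1) (fun t ht => key _ _ (hg.2 t ht))
  rcases s with _ | _ | s
  · rintro ⟨p, x⟩ ⟨q, y⟩ hne e
    have := key _ _ e
    dsimp at this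
    subst this
    rw [comb_same] at e
    exact h q x y (by simpa using hne) e
  · refine ⟨?_, fun g hg => ?_⟩
    · rintro ⟨p, x⟩ S hS
      refine deg_part (h p) x S ?_ (fun w hw => hS w hw)
      rintro ⟨q, y⟩ hw
      have := key _ _ (hS _ hw).2
      dsimp at this
      subst this
      exact ⟨y, rfl⟩
    · obtain ⟨g', hg', -⟩ := path_part hm hg (keyp g hg)
      exact (h _).2 g' hg'
  · rintro v g hg hv
    obtain ⟨g', hg', e⟩ := path_part hm hg (keyp g hg)
    obtain ⟨p, x⟩ := v
    have h0 := key _ _ (hv 0 (by omega)).2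
    generalize (g 0).1 = q at *
    dsimp at h0
    subst h0
    refine h q x g' hg' (fun t ht => ?_)
    have := hv t ht
    rw [e t ht, comb_same] at this
    exact ⟨fun e => this.1 (by rw [e]), this.2⟩

/-- an alternating path has many vertices in the part -/
theorem alt_count (m : ℕ) (Q : ℕ → Prop) [DecidablePred Q]
    (h : ∀ t, t + 1 < m → Q t ∨ Q (t + 1)) :
    m / 2 ≤ ((Finset.range m).filter Q).card := by
  induction m using Nat.strong_induction_on with
  | _ m ih =>
    rcases m with _ | _ | m
    · simp
    · simp
    · have := ih m (by omega) (fun t ht => h t (by omega))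
      rw [Finset.range_add_one, Finset.range_add_one, Finset.filter_insert, Finset.filter_insert]
      rcases h m (by omega) with h | h <;> split_ifs <;> simp_all [Finset.card_insert_of_notMem] <;> omega

/-- a new color -/
theorem comb_new {V : Fin 5 → Type} {χ : ∀ p, V p → V p → ℕ} {a b m i : ℕ} (hm : 7 ≤ m)
    (hmo : m % 2 = 1)
    (S : Fin 5 → Prop) (hS : ∀ p q, p ≠ q → S p → S q → T a b p q ≠ i)
    (hT : ∀ p q r, p ≠ q → q ≠ r → p ≠ r → T a b p q = i → T a b p r = i → T a b q r ≠ i)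
    (h1 : ∀ p, S p → P1 m (χ p) i) (h0 : ∀ p, ¬ S p → P0 (χ p) i) :
    P2 m (comb χ a b) i := by
  classical
  rintro ⟨p, x⟩ g hg hv
  have hgne : ∀ t, t + 1 < m → g t ≠ g (t + 1) := by
    intro t ht e
    have := hg.1 t (t + 1) (by omega) ht e
    omega
  -- the parts of the path vertices
  have hpart : ∀ t, t < m → p ≠ (g t).1 → T a b p (g t).1 = i := by
    intro t ht hne
    have := (hv t ht).2
    rwa [comb_diff _ _ _ _ _ hne] at this
  have hstep : ∀ t, t + 1 < m → p ≠ (g t).1 → p ≠ (g (t + 1)).1 → (g (t + 1)).1 = (g t).1 := by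
    intro t ht h h'
    by_contra hne
    have e := hg.2 t ht
    rw [comb_diff _ _ _ _ _ (Ne.symm hne)] at e
    exact hT p (g t).1 (g (t + 1)).1 h (Ne.symm hne) h' (hpart t (by omega) h) (hpart _ ht h') e
  by_cases hp : S p
  · have halt : ∀ t, t + 1 < m → (g t).1 = p ∨ (g (t + 1)).1 = p := by
      intro t ht
      by_contra hcon
      push Not at hcon
      have e := hstep t ht (Ne.symm hcon.1) (Ne.symm hcon.2)
      have hns : ¬ S (g t).1 := fun hs =>
        hS p (g t).1 (Ne.symm hcon.1) hp hs (hpart t (by omega) (Ne.symm hcon.1))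
      have e2 := hg.2 t ht
      have e3 := hgne t ht
      generalize g t = u at *
      generalize g (t + 1) = w at *
      obtain ⟨q, u⟩ := u
      obtain ⟨q', w⟩ := w
      dsimp at e
      subst e
      rw [comb_same] at e2
      exact h0 _ hns u w (by simpa using e3) e2
    have hc := alt_count m (fun t => (g t).1 = p) halt
    have := deg_part (a := a) (b := b) (h1 p hp) x
      (((Finset.range m).filter (fun t => (g t).1 = p)).image g)
      (by
        intro w hw
        simp only [Finset.mem_image, Finset.mem_filter, Finset.mem_range] at hw
        obtain ⟨t, ⟨ht, e⟩, rfl⟩ := hw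
        generalize g t = u at *
        obtain ⟨q, u⟩ := u
        dsimp at e
        subst e
        exact ⟨u, rfl⟩)
      (by
        intro w hw
        simp only [Finset.mem_image, Finset.mem_filter, Finset.mem_range] at hw
        obtain ⟨t, ⟨ht, e⟩, rfl⟩ := hw
        exact ⟨(hv t ht).1.symm, (hv t ht).2⟩)
    rw [Finset.card_image_of_injOn] at this
    · omega
    · intro t ht t' ht' e
      simp only [Finset.coe_filter, Finset.mem_range, Set.mem_ofPred_eq] at ht ht'
      exact hg.1 t t' ht.1 ht'.1 e
  · have hne : ∀ t, t < m → p ≠ (g t).1 := by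
      intro t ht e
      have := hv t ht
      generalize g t = u at *
      obtain ⟨q, u⟩ := u
      dsimp at e
      subst e
      rw [comb_same] at this
      exact h0 _ hp x u (by simpa using this.1) this.2
    obtain ⟨g', hg', -⟩ := path_part hm hg (const_of_step m (fun t => (g t).1)
      (fun t ht => hstep t ht (hne t (by omega)) (hne _ ht)))
    by_cases hq : S (g 0).1
    · exact (h1 _ hq).2 g' hg'
    · exact (P0.to1 hm (h0 _ hq)).2 g' hg'

theorem T_eq_a {a b : ℕ} (hab : a ≠ b) (p q : Fin 5) : T a b p q = a ↔ (p - q = 1 ∨ q - p = 1) := by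
  unfold T; split_ifs with h <;> simp [h, hab.symm]

theorem T_eq_b {a b : ℕ} (hab : a ≠ b) (p q : Fin 5) :
    T a b p q = b ↔ ¬ (p - q = 1 ∨ q - p = 1) := by
  unfold T; split_ifs with h
  · simp [h, hab]
  · simp [h]

theorem has_comb {m : ℕ} (hm : 7 ≤ m) (hmo : m % 2 = 1) {N0 N1 N2 : ℕ} {s0 s1 s2 s : ℕ → ℕ}
    {a b : ℕ} (hab : a ≠ b) (h0 : Has m N0 s0) (h1 : Has m N1 s1) (h2 : Has m N2 s2)
    (hold : ∀ i, i ≠ a → i ≠ b → s0 i ≤ s i ∧ s1 i ≤ s i ∧ s2 i ≤ s i)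
    (ha : s0 a = 0 ∧ s1 a ≤ 1 ∧ s2 a = 0) (hb : s0 b = 0 ∧ s1 b = 0 ∧ s2 b ≤ 1)
    (hsa : 2 ≤ s a) (hsb : 2 ≤ s b) : Has m (N0 + 2 * N1 + 2 * N2) s := by
  have hH : ∀ p : Fin 5, Has m (if p = 0 then N0 else if p = 1 ∨ p = 4 then N1 else N2)
      (if p = 0 then s0 else if p = 1 ∨ p = 4 then s1 else s2) := by
    intro p; split_ifs <;> assumption
  choose V hF χ hcard hsym hgal hsat using hH
  refine ⟨Σ p, V p, inferInstance, comb χ a b, ?_, comb_sym hsym a b, comb_gal hgal a b, ?_⟩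
  · rw [Fintype.card_sigma, Fin.sum_univ_five]
    simp only [hcard]
    simp
    ring
  · intro i
    by_cases hia : i = a
    · subst hia
      have : Sat m (comb χ i b) i 2 := by
        refine comb_new hm hmo (fun p => p = 1 ∨ p = 4) ?_ ?_ ?_ ?_
        · simp only [ne_eq, T_eq_a hab]; decide
        · simp only [ne_eq, T_eq_a hab]; decide
        · intro p hp
          have hp0 : p ≠ 0 := by rcases hp with rfl | rfl <;> decide
          have := hsat p i
          simp only [hp, hp0, if_true, if_false] at this
          exact Sat.mono (t := 1) hm this ha.2.1
        · intro p hp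
          have := hsat p i
          refine Sat.mono (t := 0) hm this ?_
          simp only [hp, if_false]
          split_ifs <;> omega
      exact this.mono hm hsa
    · by_cases hib : i = b
      · subst hib
        have : Sat m (comb χ a i) i 2 := by
          refine comb_new hm hmo (fun p => p = 2 ∨ p = 3) ?_ ?_ ?_ ?_
          · simp only [ne_eq, T_eq_b hab]; decide
          · simp only [ne_eq, T_eq_b hab]; decide
          · intro p hp
            have hp0 : p ≠ 0 := by rcases hp with rfl | rfl <;> decide
            have hp1 : ¬ (p = 1 ∨ p = 4) := by rcases hp with rfl | rfl <;> decide
            have := hsat p i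
            simp only [hp1, hp0, if_false] at this
            exact Sat.mono (t := 1) hm this hb.2.2
          · intro p hp
            have := hsat p i
            refine Sat.mono (t := 0) hm this ?_
            have : p = 0 ∨ p = 1 ∨ p = 4 := by
              clear this
              revert hp; revert p; decide
            by_cases hp0 : p = 0
            · simp [hp0, hb.1]
            · have hp1 : p = 1 ∨ p = 4 := by tauto
              simp [hp0, hp1, hb.2.1]
        exact this.mono hm hsb
      · refine comb_old hm hia hib _ (fun p => (hsat p i).mono hm ?_)
        obtain ⟨x, y, z⟩ := hold i hia hib
        split_ifs <;> assumption

theorem no_path {V : Type} [Fintype V] {m : ℕ} (h : Fintype.card V < m) (χ : V → V → ℕ) (i : ℕ)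
    (g : ℕ → V) : ¬ IsPth m χ i g := by
  intro hg
  have := Fintype.card_le_of_injective (fun t : Fin m => g t)
    (fun s t e => Fin.ext (hg.1 s t s.2 t.2 e))
  simp at this
  omega

theorem has_half0 {m : ℕ} (hm : 7 ≤ m) (a : ℕ) :
    Has m ((m - 1) / 2) (fun i => if i = a then 1 else 0) := by
  refine ⟨Fin ((m - 1) / 2), inferInstance, fun _ _ => a, by simp, fun _ _ => rfl,
    fun _ _ _ _ _ _ => Or.inl rfl, fun i => ?_⟩
  by_cases hi : i = a
  · simp only [hi, if_true]
    refine ⟨fun v s hs => ?_, no_path (by simp; omega) _ _⟩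
    have : s ⊆ Finset.univ.erase v := fun w hw => by simp [(hs w hw).1]
    have := Finset.card_le_card this
    rw [Finset.card_erase_of_mem (Finset.mem_univ _)] at this
    simp at this
    omega
  · simp only [hi, if_false]
    exact fun _ _ _ e => hi e.symm

theorem has_block {m c : ℕ} (hm : 7 ≤ m)
    (hc : (m % 4 = 1 ∧ c = m - 3) ∨ (m % 4 = 3 ∧ c = m - 2)) (a b : ℕ) (hab : a ≠ b) :
    Has m c (fun i => if i = a ∨ i = b then 1 else 0) := by
  have : NeZero c := ⟨by omega⟩
  obtain ⟨t, ht⟩ : ∃ t, t = (m - 3) / 4 := ⟨_, rfl⟩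
  let D : ℕ → Prop := fun z => z ≤ t ∨ c - t ≤ z
  let χ : ZMod c → ZMod c → ℕ := fun x y => open Classical in if D (y - x).val then a else b
  have hsym : Sym χ := by
    intro x y
    have : D (y - x).val ↔ D (x - y).val := by
      rw [← neg_sub x y, ZMod.neg_val]
      have := ZMod.val_lt (x - y)
      split_ifs with h
      · simp [h]
      · have h' : (x - y).val ≠ 0 := fun e => h ((ZMod.val_eq_zero _).1 e)
        simp only [D]
        omega
    simp only [χ, this]
  have hdeg : ∀ (v : ZMod c) (s : Finset (ZMod c)) (A : Finset ℕ),
      (∀ w ∈ s, (w - v).val ∈ A) → s.card ≤ A.card := by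
    intro v s A h
    refine Finset.card_le_card_of_injOn (fun w => (w - v).val) h ?_
    intro x _ y _ e
    simpa using ZMod.val_injective c e
  have hpos : ∀ v w : ZMod c, w ≠ v → (w - v).val ≠ 0 := by
    intro v w h e
    exact h (sub_eq_zero.1 ((ZMod.val_eq_zero _).1 e))
  refine ⟨ZMod c, inferInstance, χ, ZMod.card c, hsym, ?_, fun i => ?_⟩
  · intro x y z _ _ _
    have : ∀ x y, χ x y = a ∨ χ x y = b := by
      intro x y; simp only [χ]; split_ifs <;> simp
    have A := this x y
    have B := this y z
    have C := this x z
    omega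
  · by_cases hi : i = a ∨ i = b
    · simp only [hi, if_true]
      refine ⟨fun v s hs => ?_, no_path (by rw [ZMod.card]; omega) _ _⟩
      rcases hi with rfl | rfl
      · have := hdeg v s (Finset.Icc 1 t ∪ Finset.Ico (c - t) c) (by
          intro w hw
          obtain ⟨h1, h2⟩ := hs w hw
          have := hpos v w h1
          have h3 := ZMod.val_lt (w - v)
          have : D (w - v).val := by
            by_contra hD
            simp only [χ, hD, if_false] at h2
            exact hab h2.symm
          simp only [D] at this
          simp only [Finset.mem_union, Finset.mem_Icc, Finset.mem_Ico]
          omega)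
        have h4 := Finset.card_union_le (Finset.Icc 1 t) (Finset.Ico (c - t) c)
        simp only [Nat.card_Icc, Nat.card_Ico] at h4
        omega
      · have := hdeg v s (Finset.Ico (t + 1) (c - t)) (by
          intro w hw
          obtain ⟨h1, h2⟩ := hs w hw
          have : ¬ D (w - v).val := by
            intro hD
            simp only [χ, hD, if_true] at h2
            exact hab h2
          simp only [D] at this
          simp only [Finset.mem_Ico]
          omega)
        simp only [Nat.card_Ico] at this
        omega
    · simp only [hi, if_false]
      intro x y _ e
      simp only [χ] at e
      split_ifs at e <;> omega

theorem has_full {m c : ℕ} (hm : 7 ≤ m) (hmo : m % 2 = 1)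
    (hc : (m % 4 = 1 ∧ c = m - 3) ∨ (m % 4 = 3 ∧ c = m - 2)) (j : ℕ) :
    ∀ a b : ℕ, a ≠ b → 2 * j ≤ a → 2 * j ≤ b →
    Has m (5 ^ j * c) (fun i => if i < 2 * j then 2 else if i = a ∨ i = b then 1 else 0) := by
  induction j with
  | zero => intro a b hab _ _; simpa using has_block hm hc a b hab
  | succ j ih =>
    intro a b hab ha hb
    have H := ih a b hab (by omega) (by omega)
    have := has_comb (s := fun i => if i < 2 * (j + 1) then 2 else if i = a ∨ i = b then 1 else 0)
      hm hmo (show 2 * j ≠ 2 * j + 1 by omega) H H H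
      (by intro i h1 h2; split_ifs <;> omega)
      (by split_ifs <;> omega) (by split_ifs <;> omega)
      (by split_ifs <;> omega) (by split_ifs <;> omega)
    convert this using 1
    ring

theorem has_half {m c : ℕ} (hm : 7 ≤ m) (hmo : m % 2 = 1)
    (hc : (m % 4 = 1 ∧ c = m - 3) ∨ (m % 4 = 3 ∧ c = m - 2)) (j : ℕ) :
    ∀ a : ℕ, 2 * j ≤ a →
    Has m ((m - 1) / 2 + (5 ^ j - 1) * c) (fun i => if i < 2 * j then 2 else if i = a then 1 else 0) := by
  induction j with
  | zero => intro a _; simpa using has_half0 hm a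
  | succ j ih =>
    intro a ha
    have := has_comb (s := fun i => if i < 2 * (j + 1) then 2 else if i = a then 1 else 0)
      hm hmo (show 2 * j ≠ 2 * j + 1 by omega) (ih a (by omega))
      (has_full hm hmo hc j (2 * j) a (by omega) (by omega) (by omega))
      (has_full hm hmo hc j (2 * j + 1) a (by omega) (by omega) (by omega))
      (by intro i h1 h2; split_ifs <;> omega)
      (by split_ifs <;> omega) (by split_ifs <;> omega)
      (by split_ifs <;> omega) (by split_ifs <;> omega)
    convert this using 1
    obtain ⟨z, hz⟩ : ∃ z, 5 ^ j = z + 1 := ⟨5 ^ j - 1, by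
      have : 0 < 5 ^ j := by positivity
      omega⟩
    rw [pow_succ, hz, show (z + 1) * 5 - 1 = 5 * z + 4 by omega, show z + 1 - 1 = z by omega]
    ring

theorem has_main {m c d n : ℕ} (hm : 7 ≤ m) (hmo : m % 2 = 1)
    (hcd : (m % 4 = 1 ∧ c = m - 3 ∧ d = m - 5) ∨ (m % 4 = 3 ∧ c = m - 2 ∧ d = m - 3))
    (h : Has m n (fun i => if i < 2 then 2 else 0)) (j : ℕ) :
    ∃ N, N + d * (2 * j) = n + 5 * c * (5 ^ j - 1) ∧
      Has m N (fun i => if i < 2 * j + 2 then 2 else 0) := by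
  have hc : (m % 4 = 1 ∧ c = m - 3) ∨ (m % 4 = 3 ∧ c = m - 2) := by omega
  induction j with
  | zero => exact ⟨n, by simp, by simpa using h⟩
  | succ j ih =>
    obtain ⟨N, hN, hH⟩ := ih
    have := has_comb (s := fun i => if i < 2 * (j + 1) + 2 then 2 else 0)
      hm hmo (show 2 * (j + 1) ≠ 2 * (j + 1) + 1 by omega) hH
      (has_half hm hmo hc (j + 1) (2 * (j + 1)) (by omega))
      (has_half hm hmo hc (j + 1) (2 * (j + 1) + 1) (by omega))
      (by intro i h1 h2; split_ifs <;> omega)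
      (by split_ifs <;> omega) (by split_ifs <;> omega)
      (by split_ifs <;> omega) (by split_ifs <;> omega)
    refine ⟨_, ?_, this⟩
    obtain ⟨z, hz⟩ : ∃ z, 5 ^ j = z + 1 := ⟨5 ^ j - 1, by
      have : 0 < 5 ^ j := by positivity
      omega⟩
    rw [hz, show z + 1 - 1 = z by omega] at hN
    rw [pow_succ, hz, show (z + 1) * 5 - 1 = 5 * z + 4 by omega]
    obtain ⟨r, hr⟩ : ∃ r, r = (m - 1) / 2 := ⟨_, rfl⟩
    have h2 : 2 * c = 2 * r + d := by omega
    rw [← hr]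
    nlinarith

/-- conversion from a monochromatic copy -/
theorem copy_to {V : Type} {k m : ℕ} {χ : V → V → Fin k}
    (h : IsMonoCopy (⊤ : SimpleGraph V) χ (kipasG m)) :
    ∃ i : Fin k, ¬ P2 m (fun x y => (χ x y).val) i.val := by
  obtain ⟨f, i, hf, hadj⟩ := h
  refine ⟨i, fun hP => ?_⟩
  let e : ℕ → Fin (m + 1) := fun t => if h : t < m then ⟨t + 1, by omega⟩ else 0
  have he : ∀ t, t < m → (e t).val = t + 1 := by intro t ht; simp [e, ht]
  refine hP (f 0) (fun t => f (e t)) ⟨?_, ?_⟩ ?_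
  · intro s t hs ht h
    have := congrArg Fin.val (hf h)
    rw [he s hs, he t ht] at this
    omega
  · intro t ht
    have := hadj (e t) (e (t + 1)) (by
      rw [kipasG, SimpleGraph.fromRel_adj]
      have h1 := he t (by omega)
      have h2 := he (t + 1) ht
      refine ⟨fun h => ?_, Or.inl (Or.inr ⟨by omega, by omega⟩)⟩
      rw [h] at h1
      omega)
    exact congrArg Fin.val this.2
  · intro t ht
    have hne : (0 : Fin (m + 1)) ≠ e t := by
      intro h
      have := he t ht
      rw [← h] at this
      simp at this
    have := hadj 0 (e t) (by
      rw [kipasG, SimpleGraph.fromRel_adj]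
      exact ⟨hne, Or.inl (Or.inl rfl)⟩)
    exact ⟨this.1, congrArg Fin.val this.2⟩

/-- conversion to a monochromatic copy -/
theorem to_copy {V : Type} {k m : ℕ} {χ : V → V → Fin k} (hs : ∀ x y, χ x y = χ y x) (i : Fin k)
    (h : ¬ P2 m (fun x y => (χ x y).val) i.val) :
    IsMonoCopy (⊤ : SimpleGraph V) χ (kipasG m) := by
  unfold P2 at h
  push Not at h
  obtain ⟨v, g, hg, hv⟩ := h
  let f : Fin (m + 1) → V := fun t => if t.val = 0 then v else g (t.val - 1)
  have f0 : ∀ t : Fin (m + 1), t.val = 0 → f t = v := fun t h => if_pos h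
  have f1 : ∀ t : Fin (m + 1), t.val ≠ 0 → f t = g (t.val - 1) := fun t h => if_neg h
  have hf : Function.Injective f := by
    intro s t e
    have := s.2
    have := t.2
    by_cases h1 : s.val = 0 <;> by_cases h2 : t.val = 0
    · exact Fin.ext (by omega)
    · rw [f0 s h1, f1 t h2] at e
      exact absurd e (hv _ (by omega)).1
    · rw [f0 t h2, f1 s h1] at e
      exact absurd e.symm (hv _ (by omega)).1
    · rw [f1 t h2, f1 s h1] at e
      have := hg.1 _ _ (by omega) (by omega) e
      exact Fin.ext (by omega)
  have key : ∀ a b : Fin (m + 1), a ≠ b → (a = 0 ∨ (1 ≤ a.val ∧ b.val = a.val + 1)) →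
      χ (f a) (f b) = i := by
    intro a b hne h
    have := b.2
    rcases h with rfl | ⟨h1, h2⟩
    · have hb : b.val ≠ 0 := fun e => hne (Fin.ext (by simp [e]))
      rw [f0 _ (by simp), f1 b hb]
      exact Fin.ext (hv _ (by omega)).2
    · rw [f1 a (by omega), f1 b (by omega)]
      have := hg.2 (a.val - 1) (by omega)
      rw [show a.val - 1 + 1 = b.val - 1 by omega] at this
      exact Fin.ext this
  refine ⟨f, i, hf, fun a b hab => ?_⟩
  rw [kipasG, SimpleGraph.fromRel_adj] at hab
  refine ⟨fun e => hab.1 (hf e), ?_⟩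
  rcases hab.2 with h | h
  · exact key a b hab.1 h
  · rw [hs]; exact key b a hab.1.symm h

/-- multicolor Ramsey theorem for cliques -/
theorem ramsey (k : ℕ) (S : ℕ) : ∀ t : Fin k → ℕ, ∑ i, t i = S → ∃ N : ℕ, ∀ (V : Type)
    (χ : V → V → Fin k), (∀ x y, χ x y = χ y x) → ∀ A : Finset V, N ≤ A.card →
    ∃ i, ∃ B ⊆ A, B.card = t i ∧ ∀ x ∈ B, ∀ y ∈ B, x ≠ y → χ x y = i := by
  classical
  induction S with
  | zero =>
    intro t ht
    refine ⟨1, fun V χ hs A hA => ?_⟩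
    obtain ⟨x, hx⟩ := Finset.card_pos.1 (show 0 < A.card by omega)
    refine ⟨χ x x, ∅, by simp, ?_, by simp⟩
    have := (Finset.sum_eq_zero_iff.1 ht) (χ x x) (Finset.mem_univ _)
    simp [this]
  | succ S ih =>
    intro t ht
    by_cases h0 : ∃ i, t i = 0
    · obtain ⟨i, hi⟩ := h0
      exact ⟨0, fun V χ hs A hA => ⟨i, ∅, by simp, by simp [hi], by simp⟩⟩
    · push Not at h0
      have : ∀ i, ∃ N : ℕ, ∀ (V : Type)
          (χ : V → V → Fin k), (∀ x y, χ x y = χ y x) → ∀ A : Finset V, N ≤ A.card →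
          ∃ i', ∃ B ⊆ A, B.card = (Function.update t i (t i - 1)) i' ∧
            ∀ x ∈ B, ∀ y ∈ B, x ≠ y → χ x y = i' := by
        intro i
        apply ih
        have h1 := Finset.sum_update_of_mem (Finset.mem_univ i) t (t i - 1)
        have h2 := Finset.add_sum_erase Finset.univ t (Finset.mem_univ i)
        rw [Finset.sdiff_singleton_eq_erase] at h1
        have := h0 i
        omega
      choose N hN using this
      refine ⟨(∑ i, N i) + 1, fun V χ hs A hA => ?_⟩
      obtain ⟨x, hx⟩ := Finset.card_pos.1 (show 0 < A.card by omega)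
      obtain ⟨i, hi⟩ : ∃ i, N i ≤ ((A.erase x).filter (fun y => χ x y = i)).card := by
        by_contra hcon
        push Not at hcon
        have h1 := Finset.card_eq_sum_card_fiberwise (s := A.erase x) (t := Finset.univ)
          (f := fun y => χ x y) (fun _ _ => Finset.mem_coe.2 (Finset.mem_univ _))
        rw [Finset.card_erase_of_mem hx] at h1
        have h2 := Finset.sum_lt_sum_of_nonempty (s := (Finset.univ : Finset (Fin k)))
          ⟨χ x x, Finset.mem_univ _⟩ (fun i _ => hcon i)
        omega
      obtain ⟨i', B, hB, hcard, hmono⟩ := hN i V χ hs _ hi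
      have hBA : ∀ y ∈ B, y ≠ x ∧ y ∈ A ∧ χ x y = i := by
        intro y hy
        have := hB hy
        simp only [Finset.mem_filter, Finset.mem_erase] at this
        tauto
      by_cases hii : i' = i
      · subst hii
        refine ⟨i', insert x B, ?_, ?_, ?_⟩
        · intro y hy
          rcases Finset.mem_insert.1 hy with rfl | hy
          · exact hx
          · exact (hBA y hy).2.1
        · rw [Finset.card_insert_of_notMem (fun h => (hBA x h).1 rfl), hcard,
            Function.update_self]
          have := h0 i'
          omega
        · intro y hy z hz hne
          rcases Finset.mem_insert.1 hy with rfl | hy' <;> rcases Finset.mem_insert.1 hz with rfl | hz'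
          · exact absurd rfl hne
          · exact (hBA z hz').2.2
          · rw [hs]; exact (hBA y hy').2.2
          · exact hmono y hy' z hz' hne
      · refine ⟨i', B, fun y hy => (hBA y hy).2.1, ?_, hmono⟩
        rw [hcard, Function.update_of_ne hii]

theorem gr_nonempty (k m : ℕ) : ∃ N, ∀ c : Fin N → Fin N → Fin k, (∀ x y, c x y = c y x) →
    NoRainbowTriangle (⊤ : SimpleGraph (Fin N)) c →
    IsMonoCopy (⊤ : SimpleGraph (Fin N)) c (kipasG m) := by
  obtain ⟨N, hN⟩ := ramsey k _ (fun _ => m + 1) rfl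
  refine ⟨N, fun c hs _ => ?_⟩
  obtain ⟨i, B, -, hB, hmono⟩ := hN (Fin N) c hs Finset.univ (by simp)
  refine ⟨fun a => B.orderEmbOfFin hB a, i, (B.orderEmbOfFin hB).injective, fun a b hab => ?_⟩
  have hne : B.orderEmbOfFin hB a ≠ B.orderEmbOfFin hB b :=
    fun e => hab.ne ((B.orderEmbOfFin hB).injective e)
  exact ⟨hne, hmono _ (B.orderEmbOfFin_mem hB a) _ (B.orderEmbOfFin_mem hB b) hne⟩

/-- the first half -/
theorem first_half (k m n c d : ℕ) (hk : 2 ≤ k) (hke : k % 2 = 0)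
    (hm : 7 ≤ m) (hmo : m % 2 = 1)
    (hcd : (m % 4 = 1 ∧ c = m - 3 ∧ d = m - 5) ∨ (m % 4 = 3 ∧ c = m - 2 ∧ d = m - 3))
    (h2 : ∃ χ : Fin n → Fin n → Fin 2, (∀ x y, χ x y = χ y x) ∧
      ¬ IsMonoCopy (⊤ : SimpleGraph (Fin n)) χ (kipasG m)) (M : ℕ)
    (hM : M ≤ n + 5 * c * (5 ^ ((k - 2) / 2) - 1) - d * (k - 2)) :
    ∃ χ : Fin M → Fin M → Fin k,
      (∀ x y, χ x y = χ y x) ∧ NoRainbowTriangle (⊤ : SimpleGraph (Fin M)) χ ∧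
      ¬ IsMonoCopy (⊤ : SimpleGraph (Fin M)) χ (kipasG m) := by
  obtain ⟨χ, hs, hno⟩ := h2
  have base : Has m n (fun i => if i < 2 then 2 else 0) := by
    refine ⟨Fin n, inferInstance, fun x y => (χ x y).val, by simp, fun x y => congrArg Fin.val (hs x y), ?_, ?_⟩
    · intro x y z _ _ _
      have := (χ x y).2
      have := (χ y z).2
      have := (χ x z).2
      dsimp only
      omega
    · intro i
      by_cases hi : i < 2
      · simp only [hi, if_true]
        by_contra hcon
        exact hno (to_copy hs ⟨i, hi⟩ hcon)
      · simp only [hi, if_false]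
        intro x y _ e
        have := (χ x y).2
        dsimp only at e
        omega
  obtain ⟨N, hN, V, _, ψ, hcard, hsym, hgal, hsat⟩ := has_main hm hmo hcd base ((k - 2) / 2)
  rw [show 2 * ((k - 2) / 2) = k - 2 by omega] at hN hsat
  have hMN : M ≤ Fintype.card V := by omega
  let e : Fin M ↪ V := (Fin.castLEEmb hMN).trans (Fintype.equivFin V).symm.toEmbedding
  let φ : Fin M → Fin M → Fin k := fun x y =>
    ⟨if ψ (e x) (e y) < k then ψ (e x) (e y) else 0, by split_ifs <;> omega⟩
  have hφ : ∀ x y, x ≠ y → (φ x y).val = ψ (e x) (e y) := by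
    intro x y hne
    have : ψ (e x) (e y) < k := by
      by_contra hcon
      have := hsat (ψ (e x) (e y))
      dsimp only at this
      rw [if_neg (by omega)] at this
      exact this (e x) (e y) (fun h => hne (e.injective h)) rfl
    simp [φ, this]
  refine ⟨φ, ?_, ?_, ?_⟩
  · intro x y
    simp only [φ, hsym (e x) (e y)]
  · rintro ⟨x, y, z, h1, h2, h3, h4, h5, h6⟩
    rw [SimpleGraph.top_adj] at h1 h2 h3
    have := hgal (e x) (e y) (e z) (fun h => h1 (e.injective h)) (fun h => h2 (e.injective h))
      (fun h => h3 (e.injective h))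
    rw [← hφ x y h1, ← hφ y z h2, ← hφ x z h3] at this
    rcases this with h | h | h
    · exact h4 (Fin.ext h)
    · exact h5 (Fin.ext h)
    · exact h6 (Fin.ext h)
  · intro hcopy
    obtain ⟨i, hi⟩ := copy_to hcopy
    apply hi
    intro v g hg hv
    have := hsat i.val
    have hik := i.2
    dsimp only at this
    rw [if_pos (by omega)] at this
    refine this (e v) (fun t => e (g t)) ⟨?_, ?_⟩ ?_
    · intro s t h1 h2 h
      exact hg.1 s t h1 h2 (e.injective h)
    · intro t ht
      rw [← hg.2 t ht]
      refine (hφ _ _ (fun h => ?_)).symm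
      have := hg.1 _ _ (by omega) ht h
      omega
    · intro t ht
      obtain ⟨h1, h2⟩ := hv t ht
      exact ⟨fun h => h1 (e.injective h), by rw [← hφ _ _ h1]; exact h2⟩

end KipasAux

/-- Even `k ≥ 2`, odd `m ≥ 7`: from a 2-coloring of `K_n` with no monochromatic
kipas `K̂_m`, one gets a Gallai `k`-coloring of a larger complete graph with no
monochromatic `K̂_m`; consequently the Gallai–Ramsey lower bound. -/
theorem kipas_gallai_lower_even_k_odd_m (k m n c d : ℕ) (hk : 2 ≤ k) (hke : k % 2 = 0)
    (hm : 7 ≤ m) (hmo : m % 2 = 1)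
    (hcd : (m % 4 = 1 ∧ c = m - 3 ∧ d = m - 5) ∨ (m % 4 = 3 ∧ c = m - 2 ∧ d = m - 3))
    (h2 : ∃ χ : Fin n → Fin n → Fin 2, (∀ x y, χ x y = χ y x) ∧
      ¬ IsMonoCopy (⊤ : SimpleGraph (Fin n)) χ (kipasG m)) :
    (∃ χ : Fin (n + 5 * c * (5 ^ ((k - 2) / 2) - 1) - d * (k - 2)) →
        Fin (n + 5 * c * (5 ^ ((k - 2) / 2) - 1) - d * (k - 2)) → Fin k,
      (∀ x y, χ x y = χ y x) ∧
      NoRainbowTriangle (⊤ : SimpleGraph (Fin (n + 5 * c * (5 ^ ((k - 2) / 2) - 1) - d * (k - 2)))) χ ∧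
      ¬ IsMonoCopy (⊤ : SimpleGraph (Fin (n + 5 * c * (5 ^ ((k - 2) / 2) - 1) - d * (k - 2)))) χ (kipasG m)) ∧
    Ramsey2 (kipasG m) + 5 * c * (5 ^ ((k - 2) / 2) - 1) - d * (k - 2) ≤
      GallaiRamsey k (kipasG m) := by
  refine ⟨KipasAux.first_half k m n c d hk hke hm hmo hcd h2 _ le_rfl, ?_⟩
  have hmem := Nat.sInf_mem (KipasAux.gr_nonempty k m)
  by_contra hcon
  obtain ⟨R, hR⟩ : ∃ R, R = Ramsey2 (kipasG m) := ⟨_, rfl⟩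
  rw [← hR] at hcon
  have hbase : ∃ χ : Fin (R - 1) → Fin (R - 1) → Fin 2, (∀ x y, χ x y = χ y x) ∧
      ¬ IsMonoCopy (⊤ : SimpleGraph (Fin (R - 1))) χ (kipasG m) := by
    rcases Nat.eq_zero_or_pos R with h0 | hpos
    · refine ⟨fun _ _ => 0, fun _ _ => rfl, ?_⟩
      rintro ⟨f, -⟩
      have := (f 0).2
      omega
    · have := Nat.notMem_of_lt_sInf (show R - 1 < Ramsey2 (kipasG m) by omega)
      simp only [Set.mem_ofPred_eq, not_forall] at this
      obtain ⟨χ, h1, h2⟩ := this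
      exact ⟨χ, h1, h2⟩
  obtain ⟨χ, h1, h2, h3⟩ := KipasAux.first_half k m (R - 1) c d hk hke hm hmo hcd hbase
    (GallaiRamsey k (kipasG m)) (by omega)
  exact h3 (hmem χ h1 h2)
end
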